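/- arXiv:1907.02710 — 3 statements merged into one kernel-verified Lean document; each statement's English description precedes it below -/
import Mathlib

section
/- Let θ = 1, α > 0, t₀ > 0 and 1 ≤ γ ≤ 2. Let x : [t₀, ∞) → ℝⁿ be a solution of the perturbed inertial ODE with damping α/t. Assume that ∫_{t₀}^∞ t^{γα/(γ+2)} ‖g(t)‖ dt < ∞, that F satisfies hypotheses H1(γ) and H2(2), that F has a unique minimizer, and that α > 1 + 2/γ. Then there exist C > 0 and t₁ ≥ t₀ such that for all t ≥ t₁, F(x(t)) − F* ≤ C · t^{−2γα/(γ+2)}. -/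
open MeasureTheory
open scoped RealInnerProductSpace

open Filter Topology in
lemma prim_exists (k : ℝ → ℝ) (T : ℝ) (hk : ContinuousOn k (Set.Ici T))
    (hi : IntegrableOn k (Set.Ici T)) (h0 : ∀ t ≥ T, 0 ≤ k t) :
    ∃ (P : ℝ → ℝ) (M : ℝ), (∀ t ≥ T, HasDerivAt P (k t) t) ∧
      (∀ t ≥ T, 0 ≤ P t ∧ P t ≤ M) ∧ Tendsto P atTop (𝓝 M) := by
  set k' : ℝ → ℝ := fun t => k (max t T) with hk'
  have hc : Continuous k' := by
    apply hk.comp_continuous (by fun_prop)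
    intro t
    exact le_max_right t T
  have heq : ∀ t ≥ T, k' t = k t := by
    intro t ht
    simp [hk', max_eq_left ht]
  have h0' : ∀ t, 0 ≤ k' t := fun t => h0 _ (le_max_right t T)
  have hi' : IntegrableOn k' (Set.Ioi T) := by
    refine (integrableOn_congr_fun ?_ measurableSet_Ioi).mpr (hi.mono_set Set.Ioi_subset_Ici_self)
    intro t ht
    exact heq t (le_of_lt ht)
  have ht := intervalIntegral_tendsto_integral_Ioi T hi' tendsto_id
  have hmono : ∀ s t, s ≤ t → (∫ r in T..s, k' r) ≤ ∫ r in T..t, k' r := by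
    intro s t hst
    have h1 := intervalIntegral.integral_add_adjacent_intervals
      (hc.intervalIntegrable (μ := volume) T s) (hc.intervalIntegrable (μ := volume) s t)
    have h2 : 0 ≤ ∫ r in s..t, k' r := intervalIntegral.integral_nonneg hst (fun r _ => h0' r)
    linarith
  refine ⟨fun t => ∫ r in T..t, k' r, ∫ r in Set.Ioi T, k' r, ?_, ?_, ht⟩
  · intro t htT
    rw [← heq t htT]
    exact hc.integral_hasStrictDerivAt T t |>.hasDerivAt
  · intro t htT
    refine ⟨intervalIntegral.integral_nonneg htT (fun r _ => h0' r), ?_⟩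
    apply ge_of_tendsto ht
    filter_upwards [eventually_ge_atTop t] with s hs
    exact hmono t s hs

lemma anti_of_deriv (f f' : ℝ → ℝ) (T : ℝ) (hf : ∀ t ≥ T, HasDerivAt f (f' t) t)
    (h : ∀ t ≥ T, f' t ≤ 0) : ∀ s ≥ T, ∀ t ≥ s, f t ≤ f s := by
  have : AntitoneOn f (Set.Ici T) := by
    apply antitoneOn_of_deriv_nonpos (convex_Ici T)
    · intro t ht
      exact (hf t ht).continuousAt.continuousWithinAt
    · intro t ht
      rw [interior_Ici] at ht
      exact (hf t (le_of_lt ht)).differentiableAt.differentiableWithinAt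
    · intro t ht
      rw [interior_Ici] at ht
      rw [(hf t (le_of_lt ht)).deriv]
      exact h t (le_of_lt ht)
  intro s hs t ht
  exact this hs (le_trans hs ht : T ≤ t) ht

lemma gron (Y Y' k : ℝ → ℝ) (T : ℝ) (hk : ContinuousOn k (Set.Ici T))
    (hi : IntegrableOn k (Set.Ici T)) (h0 : ∀ t ≥ T, 0 ≤ k t)
    (hY : ∀ t ≥ T, HasDerivAt Y (Y' t) t) (hle : ∀ t ≥ T, Y' t ≤ k t * Y t)
    (hY0 : ∀ t ≥ T, 0 ≤ Y t) : ∃ C, ∀ t ≥ T, Y t ≤ C := by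
  obtain ⟨P, M, hP, hPb, -⟩ := prim_exists k T hk hi h0
  have key := anti_of_deriv (fun t => Y t * Real.exp (-P t))
    (fun t => Y' t * Real.exp (-P t) + Y t * (Real.exp (-P t) * (-k t))) T
    (fun t ht => (hY t ht).mul ((hP t ht).neg.exp))
    (fun t ht => by
      have := hle t ht
      have he := Real.exp_pos (-P t)
      nlinarith)
  refine ⟨Y T * Real.exp (-P T) * Real.exp M, fun t ht => ?_⟩
  have h1 := key T le_rfl t ht
  have h2 : Y t = Y t * Real.exp (-P t) * Real.exp (P t) := by
    rw [mul_assoc, ← Real.exp_add]; simp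
  rw [h2]
  have h3 : Real.exp (P t) ≤ Real.exp M := Real.exp_le_exp.mpr (hPb t ht).2
  have h4 : 0 ≤ Y T * Real.exp (-P T) := mul_nonneg (hY0 T le_rfl) (Real.exp_pos _).le
  have h5 := Real.exp_pos (P t)
  exact mul_le_mul h1 h3 h5.le h4

section
variable {E : Type*} [NormedAddCommGroup E] [InnerProductSpace ℝ E] [CompleteSpace E]

lemma convex_grad (F : E → ℝ) (hconv : ConvexOn ℝ Set.univ F) (hdiff : Differentiable ℝ F)
    (y z : E) : F y - F z ≤ ⟪gradient F y, y - z⟫ := by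
  have hd : HasDerivAt (fun s : ℝ => F (AffineMap.lineMap y z s)) (⟪gradient F y, z - y⟫) 0 := by
    have h1 := (hdiff y).hasGradientAt.hasFDerivAt
    have h2 : HasDerivAt (fun s : ℝ => (AffineMap.lineMap y z s : E)) (z - y) 0 :=
      AffineMap.hasDerivAt_lineMap
    have h3 : HasFDerivAt F ((InnerProductSpace.toDual ℝ E) (gradient F y))
      (AffineMap.lineMap y z (0:ℝ)) := by simpa using h1
    exact h3.comp_hasDerivAt (0:ℝ) h2
  have hc : ConvexOn ℝ Set.univ (fun s : ℝ => F (AffineMap.lineMap y z s)) := by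
    exact hconv.comp_affineMap (AffineMap.lineMap y z : ℝ →ᵃ[ℝ] E)
  have := hc.le_slope_of_hasDerivAt (x := 0) (y := 1) (by simp) (by simp) (by norm_num) hd
  simp only [slope_def_field, AffineMap.lineMap_apply_one, AffineMap.lineMap_apply_zero, sub_zero,
    div_one] at this
  have e : ⟪gradient F y, y - z⟫ = - ⟪gradient F y, z - y⟫ := by
    rw [← inner_neg_right]; simp
  rw [e]; linarith

lemma coercive (F : E → ℝ) (hconv : ConvexOn ℝ Set.univ F) (z : E) (K r : ℝ)
    (hr : 0 < r) (h : ∀ y, ‖y - z‖ = r → K * r ^ 2 ≤ F y - F z) (y : E) (hy : r ≤ ‖y - z‖) :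
    K * r * ‖y - z‖ ≤ F y - F z := by
  have hpos : 0 < ‖y - z‖ := lt_of_lt_of_le hr hy
  set s := r / ‖y - z‖ with hs
  have hs0 : 0 < s := div_pos hr hpos
  have hs1 : s ≤ 1 := (div_le_one hpos).mpr hy
  have hsr : s * ‖y - z‖ = r := by rw [hs]; field_simp
  have h1 := h (z + s • (y - z)) (by
    rw [add_sub_cancel_left, norm_smul, Real.norm_of_nonneg hs0.le, hsr])
  have h2 := hconv.2 (Set.mem_univ y) (Set.mem_univ z) hs0.le (by linarith : 0 ≤ 1 - s) (by ring)
  have h3 : s • y + (1 - s) • z = z + s • (y - z) := by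
    rw [smul_sub, sub_smul, one_smul]; abel
  rw [h3] at h2
  simp only [smul_eq_mul] at h2
  have h4 : s * (K * r * ‖y - z‖) ≤ s * (F y - F z) := by
    have : s * (K * r * ‖y - z‖) = K * r ^ 2 := by rw [← hsr]; ring
    rw [this]; linarith
  exact le_of_mul_le_mul_left h4 hs0

lemma deriv_facts (F : E → ℝ) (hdiff : Differentiable ℝ F) (z : E)
    (α t : ℝ) (g x x' x'' : ℝ → E)
    (hx : HasDerivAt x (x' t) t)
    (hx'd : HasDerivAt x' (x'' t) t)
    (hode : x'' t + (α / t) • x' t + gradient F (x t) = g t) :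
    HasDerivAt (fun t => F (x t)) ⟪gradient F (x t), x' t⟫ t ∧
    HasDerivAt (fun t => ⟪x' t, x' t⟫)
      (2 * (⟪x' t, g t⟫ - α / t * ⟪x' t, x' t⟫ - ⟪gradient F (x t), x' t⟫)) t ∧
    HasDerivAt (fun t => ⟪x t - z, x' t⟫)
      (⟪x' t, x' t⟫ + ⟪x t - z, g t⟫ - α / t * ⟪x t - z, x' t⟫
        - ⟪gradient F (x t), x t - z⟫) t ∧
    HasDerivAt (fun t => ⟪x t - z, x t - z⟫) (2 * ⟪x t - z, x' t⟫) t := by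
  have e : x'' t = g t - (α / t) • x' t - gradient F (x t) := by rw [← hode]; abel
  have hu : HasDerivAt (fun t => x t - z) (x' t) t := hx.sub_const z
  refine ⟨?_, ?_, ?_, ?_⟩
  · have h1 := (hdiff (x t)).hasGradientAt.hasFDerivAt
    exact h1.comp_hasDerivAt t hx
  · refine (hx'd.inner ℝ hx'd).congr_deriv ?_
    rw [e, real_inner_comm (x' t) (g t - _ - _)]
    simp only [inner_sub_right, inner_smul_right]
    rw [real_inner_comm (x' t) (gradient F (x t))]
    ring
  · refine (hu.inner ℝ hx'd).congr_deriv ?_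
    rw [e]
    simp only [inner_sub_right, inner_smul_right]
    rw [← inner_sub_right, real_inner_comm (x t - z) (gradient F (x t))]
    ring
  · refine (hu.inner ℝ hu).congr_deriv ?_
    rw [real_inner_comm (x t - z) (x' t)]
    ring

end

open Filter Topology in
lemma phase1 (W V w m gn nv dE dw : ℝ → ℝ) (t₀ α r c : ℝ) (ht₀ : 0 < t₀) (hα : 0 < α)
    (hr : 0 ≤ r) (hc : 0 ≤ c)
    (hgc : ContinuousOn gn (Set.Ici t₀)) (hgi : IntegrableOn gn (Set.Ici t₀))
    (hg0 : ∀ t ≥ t₀, 0 ≤ gn t)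
    (hW : ∀ t ≥ t₀, 0 ≤ W t) (hnv : ∀ t ≥ t₀, 0 ≤ nv t) (hV : ∀ t ≥ t₀, nv t ^ 2 = V t)
    (hm : ∀ t ≥ t₀, 0 ≤ m t) (hmb : ∀ t ≥ t₀, m t ≤ r + c * W t)
    (hE : ∀ t ≥ t₀, HasDerivAt (fun t => W t + V t / 2) (dE t) t)
    (hdE : ∀ t ≥ t₀, dE t ≤ gn t * nv t - α / t * V t)
    (hw : ∀ t ≥ t₀, HasDerivAt w (dw t) t)
    (hdw : ∀ t ≥ t₀, dw t ≤ V t + m t * gn t - α / t * w t - W t)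
    (hwb : ∀ t ≥ t₀, |w t| ≤ m t * nv t) (δ : ℝ) (hδ : 0 < δ) :
    ∃ T ≥ t₀, ∀ t ≥ T, W t + V t / 2 ≤ δ := by
  have hV0 : ∀ t ≥ t₀, 0 ≤ V t := fun t ht => by rw [← hV t ht]; positivity
  -- boundedness of the energy
  obtain ⟨C, hC⟩ : ∃ C, ∀ t ≥ t₀, 1 + (W t + V t / 2) ≤ C := by
    refine gron (fun t => 1 + (W t + V t / 2)) dE gn t₀ hgc hgi hg0
      (fun t ht => (hE t ht).const_add 1) ?_ ?_
    · intro t ht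
      have h1 := hdE t ht
      have h2 : 0 ≤ α / t * V t := mul_nonneg (div_nonneg hα.le (by linarith)) (hV0 t ht)
      have h3 : nv t ≤ 1 + (W t + V t / 2) := by
        have := hW t ht
        rw [← hV t ht]
        nlinarith [sq_nonneg (nv t - 1)]
      have := mul_le_mul_of_nonneg_left h3 (hg0 t ht)
      linarith
    · intro t ht
      have := hW t ht
      have := hV0 t ht
      linarith
  have hC1 : 0 ≤ C := by
    have := hC t₀ le_rfl
    have := hW t₀ le_rfl
    have := hV0 t₀ le_rfl
    linarith
  have hnvb : ∀ t ≥ t₀, nv t ≤ C := by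
    intro t ht
    have := hC t ht
    have := hW t ht
    rw [← hV t ht] at *
    nlinarith [sq_nonneg (nv t - 1)]
  set R := r + c * C with hR
  have hR0 : 0 ≤ R := by positivity
  have hmR : ∀ t ≥ t₀, m t ≤ R := by
    intro t ht
    have h1 := hC t ht
    have h2 := hV0 t ht
    have h3 : c * W t ≤ c * C := mul_le_mul_of_nonneg_left (by linarith) hc
    have := hmb t ht
    linarith
  have hwM : ∀ t ≥ t₀, |w t| ≤ R * C := fun t ht =>
    (hwb t ht).trans (mul_le_mul (hmR t ht) (hnvb t ht) (hnv t ht) hR0)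
  obtain ⟨P, M, hP, hPb, hPt⟩ := prim_exists gn t₀ hgc hgi hg0
  -- almost monotonicity
  have hmono := anti_of_deriv (fun t => (W t + V t / 2) - C * P t) (fun t => dE t - C * gn t) t₀
    (fun t ht => (hE t ht).sub ((hP t ht).const_mul C))
    (fun t ht => by
      have h1 := hdE t ht
      have h2 : 0 ≤ α / t * V t := mul_nonneg (div_nonneg hα.le (by linarith)) (hV0 t ht)
      have := mul_le_mul_of_nonneg_left (hnvb t ht) (hg0 t ht)
      linarith)
  set e : ℝ := 3 / (2 * α) with he
  have he0 : 0 < e := by positivity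
  have heα : e * α = 3 / 2 := by rw [he]; field_simp
  set B : ℝ := R / t₀ + e * C with hB
  have hB0 : 0 ≤ B := by positivity
  set D : ℝ := (α + 1) * (R * C) with hD
  have hD0 : 0 ≤ D := by positivity
  -- the energy is frequently small
  have hfreq : ∀ S ≥ t₀, ∀ δ > 0, ∃ t ≥ S, W t + V t / 2 ≤ δ := by
    intro S hS δ hδ
    by_contra! hcon
    have key := anti_of_deriv
      (fun t => w t * t⁻¹ + e * (W t + V t / 2) - B * P t + D * t⁻¹ + δ * Real.log t)
      (fun t => (dw t * t⁻¹ + w t * (-(t ^ 2)⁻¹)) + e * dE t - B * gn t + D * (-(t ^ 2)⁻¹)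
        + δ * t⁻¹) S
      (fun t ht => by
        have ht0 : t₀ ≤ t := le_trans hS ht
        have htp : t ≠ 0 := by linarith
        exact (((((hw t ht0).mul (hasDerivAt_inv htp)).add ((hE t ht0).const_mul e)).sub
          ((hP t ht0).const_mul B)).add ((hasDerivAt_inv htp).const_mul D)).add
          ((Real.hasDerivAt_log htp).const_mul δ))
      (fun t ht => by
        have ht0 : t₀ ≤ t := le_trans hS ht
        have htp : 0 < t := by linarith
        have hs : 0 < t⁻¹ := by positivity
        have hst : t⁻¹ ≤ t₀⁻¹ := inv_anti₀ ht₀ ht0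
        have h1 := hdE t ht0
        have h2 := hdw t ht0
        have h3 := hcon t ht
        have h4 := hg0 t ht0
        have h5 := hV0 t ht0
        have h6 := hwM t ht0
        have h7 := hmR t ht0
        have h8 := hnvb t ht0
        have h9 := hm t ht0
        rw [← inv_pow]
        simp only [div_eq_mul_inv] at h1 h2 hB
        generalize t⁻¹ = s at *
        have a1 : dw t * s ≤ (V t + m t * gn t - α * s * w t - W t) * s :=
          mul_le_mul_of_nonneg_right h2 hs.le
        have a2 : e * dE t ≤ e * (gn t * nv t - α * s * V t) :=
          mul_le_mul_of_nonneg_left h1 he0.le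
        have a3 : e * (gn t * nv t) ≤ e * (gn t * C) :=
          mul_le_mul_of_nonneg_left (mul_le_mul_of_nonneg_left h8 h4) he0.le
        have a4 : e * (α * s * V t) = 3 / 2 * (s * V t) := by rw [← heα]; ring
        have a5 : m t * gn t * s ≤ R * gn t * t₀⁻¹ := by
          apply mul_le_mul (mul_le_mul_of_nonneg_right h7 h4) hst hs.le (by positivity)
        have a6 : -((α + 1) * s ^ 2 * w t) ≤ D * s ^ 2 := by
          have : -(w t) ≤ R * C := (neg_le_abs _).trans h6
          have := mul_le_mul_of_nonneg_left this (by positivity : 0 ≤ (α + 1) * s ^ 2)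
          rw [hD]; linarith
        have a7 : δ * s ≤ (W t + V t * 2⁻¹) * s :=
          mul_le_mul_of_nonneg_right (by linarith) hs.le
        have a8 : B * gn t = R * gn t * t₀⁻¹ + e * (gn t * C) := by rw [hB]; ring
        rw [a8]
        linarith)
    set Q := w S * S⁻¹ + e * (W S + V S / 2) - B * P S + D * S⁻¹ + δ * Real.log S with hQ
    have hlog : ∀ t ≥ S, δ * Real.log t ≤ Q + R * C * t₀⁻¹ + B * M := by
      intro t ht
      have h := key S le_rfl t ht
      rw [← hQ] at h
      have ht0 : t₀ ≤ t := le_trans hS ht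
      have hs : 0 < t⁻¹ := by
        have : 0 < t := by linarith
        positivity
      have hst : t⁻¹ ≤ t₀⁻¹ := inv_anti₀ ht₀ ht0
      have h1 : -(w t * t⁻¹) ≤ R * C * t₀⁻¹ := by
        have : -(w t) ≤ R * C := (neg_le_abs _).trans (hwM t ht0)
        have := mul_le_mul_of_nonneg_right this hs.le
        have := mul_le_mul_of_nonneg_left hst (by positivity : 0 ≤ R * C)
        linarith
      have h2 : B * P t ≤ B * M := mul_le_mul_of_nonneg_left (hPb t ht0).2 hB0
      have h3 : 0 ≤ D * t⁻¹ := by positivity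
      have h4 : 0 ≤ e * (W t + V t / 2) := by
        have := hW t ht0
        have := hV0 t ht0
        positivity
      linarith
    have hl := (Real.tendsto_log_atTop.const_mul_atTop hδ).eventually
      (eventually_gt_atTop (Q + R * C * t₀⁻¹ + B * M))
    obtain ⟨t, h1, h2⟩ := (hl.and (eventually_ge_atTop S)).exists
    exact absurd (hlog t h2) (not_le.mpr h1)
  -- conclusion
  have hη : 0 < δ / (2 * (C + 1)) := by positivity
  have hev : ∀ᶠ t in atTop, M - δ / (2 * (C + 1)) < P t :=
    hPt.eventually (lt_mem_nhds (by linarith))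
  obtain ⟨S, hS⟩ := eventually_atTop.mp hev
  obtain ⟨T, hT, hTE⟩ := hfreq (max S t₀) (le_max_right _ _) (δ / 2) (by positivity)
  have hT0 : t₀ ≤ T := le_trans (le_max_right _ _) hT
  refine ⟨T, hT0, fun t ht => ?_⟩
  have h1 := hmono T hT0 t ht
  have h2 := hS T (le_trans (le_max_left _ _) hT)
  have h3 := (hPb t (le_trans hT0 ht)).2
  have h4 : C * (P t - P T) ≤ C * (δ / (2 * (C + 1))) :=
    mul_le_mul_of_nonneg_left (by linarith) hC1
  have h5 : C * (δ / (2 * (C + 1))) ≤ δ / 2 := by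
    have : δ / 2 = (C + 1) * (δ / (2 * (C + 1))) := by field_simp
    rw [this]
    exact mul_le_mul_of_nonneg_right (by linarith) hη.le
  linarith

set_option maxHeartbeats 1000000 in
lemma phase2 (W V w h gn vn a b c d : ℝ → ℝ) (T α γ K l p : ℝ) (hT : 0 < T)
    (hK : 0 < K) (hl : l = 2 * α / (γ + 2)) (hp : p = γ * α / (γ + 2)) (hγ : 1 ≤ γ) (hα : 0 < α)
    (hp1 : 1 < p)
    (hgc : ContinuousOn gn (Set.Ici T))
    (hgi : IntegrableOn (fun t => t ^ p * gn t) (Set.Ici T))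
    (hg0 : ∀ t ≥ T, 0 ≤ gn t)
    (hh0 : ∀ t ≥ T, 0 ≤ h t)
    (hWd : ∀ t ≥ T, HasDerivAt W (a t) t)
    (hVd : ∀ t ≥ T, HasDerivAt V (2 * (b t - α / t * V t - a t)) t)
    (hwd : ∀ t ≥ T, HasDerivAt w (V t + c t - α / t * w t - d t) t)
    (hhd : ∀ t ≥ T, HasDerivAt h (2 * w t) t)
    (hd : ∀ t ≥ T, γ * W t ≤ d t)
    (hKh : ∀ t ≥ T, K * h t ≤ W t)
    (hvn : ∀ t ≥ T, vn t ^ 2 = l ^ 2 * h t + 2 * l * t * w t + t ^ 2 * V t)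
    (hcb : ∀ t ≥ T, l * c t + t * b t ≤ gn t * vn t) :
    ∃ C > 0, ∃ t₁ ≥ T, ∀ t ≥ t₁, W t ≤ C * t ^ (-(2 * p)) := by
  have hl0 : 0 < l := by rw [hl]; positivity
  have hpl : p + l = α := by rw [hp, hl]; field_simp
  have hlγ : l * γ = 2 * p := by rw [hp, hl]; ring
  set ξ : ℝ := l * (1 - p) with hξ
  set A : ℝ := (p - 1) * |ξ + l ^ 2| / K with hA
  have hA0 : 0 ≤ A := by
    rw [hA]; exact div_nonneg (mul_nonneg (by linarith) (abs_nonneg _)) hK.le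
  set T₁ : ℝ := max T (|ξ| / K + 1) with hT₁
  have hT1T : T ≤ T₁ := le_max_left _ _
  have hW0 : ∀ t ≥ T, 0 ≤ W t := fun t ht =>
    le_trans (mul_nonneg hK.le (hh0 t ht)) (hKh t ht)
  -- energy lower bound
  have hlow : ∀ t ≥ T₁, t ^ 2 * W t / 2 ≤ t ^ 2 * W t + ξ / 2 * h t := by
    intro t ht
    have ht1 : T ≤ t := le_trans hT1T ht
    have h1 : |ξ| / K + 1 ≤ t := le_trans (le_max_right _ _) ht
    have h0 : 0 ≤ |ξ| / K := by positivity
    have h2 : |ξ| / K ≤ t ^ 2 := by nlinarith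
    have h3 : |ξ| * h t ≤ t ^ 2 * W t := by
      have e1 : |ξ| * h t = |ξ| / K * (K * h t) := by field_simp
      rw [e1]
      exact mul_le_mul h2 (hKh t ht1) (mul_nonneg hK.le (hh0 t ht1)) (by positivity)
    have h4 : -ξ * h t ≤ |ξ| * h t := mul_le_mul_of_nonneg_right (neg_le_abs _) (hh0 t ht1)
    linarith
  set En : ℝ → ℝ := fun t => t ^ 2 * W t
    + (l ^ 2 * h t + 2 * l * (t * w t) + t ^ 2 * V t) / 2 + ξ / 2 * h t with hEn
  set En' : ℝ → ℝ := fun t => (2 * t * W t + t ^ 2 * a t)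
    + (l ^ 2 * (2 * w t) + 2 * l * (1 * w t + t * (V t + c t - α / t * w t - d t))
      + (2 * t * V t + t ^ 2 * (2 * (b t - α / t * V t - a t)))) / 2 + ξ / 2 * (2 * w t) with hEn'
  have hEnd : ∀ t ≥ T, HasDerivAt En (En' t) t := by
    intro t ht
    have hsq : HasDerivAt (fun t : ℝ => t ^ 2) (2 * t) t := by
      simpa using hasDerivAt_pow 2 t
    exact ((hsq.mul (hWd t ht)).add (((((hhd t ht).const_mul (l ^ 2)).add
      (((hasDerivAt_id t).mul (hwd t ht)).const_mul (2 * l))).add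
      (hsq.mul (hVd t ht))).div_const 2)).add ((hhd t ht).const_mul (ξ / 2))
  have hEnlow : ∀ t ≥ T₁, t ^ 2 * W t / 2 + vn t ^ 2 / 2 ≤ En t := by
    intro t ht
    have h1 := hlow t ht
    rw [hvn t (le_trans hT1T ht)]
    simp only [hEn]
    linarith
  have hEn'le : ∀ t ≥ T, t * En' t ≤ -(2 * (p - 1)) * En t + A * W t + t ^ 2 * (gn t * vn t) := by
    intro t ht
    have htp : 0 < t := by linarith
    have h1 : t * En' t = -(2 * (p - 1)) * En t + (p - 1) * (ξ + l ^ 2) * h t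
        + t ^ 2 * (l * c t + t * b t) + t ^ 2 * (2 * p * W t - l * d t) := by
      simp only [hEn, hEn', hξ]
      rw [← hpl]
      field_simp
      ring
    have h2 : (p - 1) * (ξ + l ^ 2) * h t ≤ A * W t := by
      have e1 : (p - 1) * (ξ + l ^ 2) * h t ≤ (p - 1) * |ξ + l ^ 2| * h t :=
        mul_le_mul_of_nonneg_right
          (mul_le_mul_of_nonneg_left (le_abs_self _) (by linarith)) (hh0 t ht)
      have e2 : (p - 1) * |ξ + l ^ 2| * h t = A * (K * h t) := by rw [hA]; field_simp
      have e3 := mul_le_mul_of_nonneg_left (hKh t ht) hA0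
      linarith
    have h3 : t ^ 2 * (l * c t + t * b t) ≤ t ^ 2 * (gn t * vn t) :=
      mul_le_mul_of_nonneg_left (hcb t ht) (by positivity)
    have h4 : t ^ 2 * (2 * p * W t - l * d t) ≤ 0 := by
      have e1 := mul_le_mul_of_nonneg_left (hd t ht) hl0.le
      have e2 : 2 * p * W t - l * d t ≤ 0 := by rw [← hlγ]; linarith
      exact mul_nonpos_of_nonneg_of_nonpos (by positivity) e2
    linarith
  obtain ⟨C, hC⟩ : ∃ C, ∀ t ≥ T₁, 1 + t ^ (2 * (p - 1)) * En t ≤ C := by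
    refine gron (fun t => 1 + t ^ (2 * (p - 1)) * En t)
      (fun t => (2 * (p - 1)) * t ^ (2 * (p - 1) - 1) * En t + t ^ (2 * (p - 1)) * En' t)
      (fun t => 2 * A * t ^ (-3 : ℝ) + 2 * (t ^ p * gn t)) T₁ ?_ ?_ ?_ ?_ ?_ ?_
    · have hpos : ∀ t ∈ Set.Ici T₁, t ≠ 0 := by
        intro t ht
        have : T₁ ≤ t := ht
        linarith
      have hr : ∀ q : ℝ, ContinuousOn (fun t : ℝ => t ^ q) (Set.Ici T₁) := fun q =>
        ContinuousOn.rpow_const continuousOn_id (fun t ht => Or.inl (hpos t ht))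
      exact ((continuousOn_const.mul (hr _))).add (continuousOn_const.mul
        ((hr p).mul (hgc.mono (Set.Ici_subset_Ici.mpr hT1T))))
    · refine Integrable.add ?_ ?_
      · refine Integrable.const_mul ?_ _
        have := integrableOn_Ioi_rpow_of_lt (by norm_num : (-3 : ℝ) < -1) (by linarith : 0 < T₁)
        exact (integrableOn_Ici_iff_integrableOn_Ioi).mpr this
      · exact Integrable.const_mul (hgi.mono_set (Set.Ici_subset_Ici.mpr hT1T)) _
    · intro t ht
      have htp : 0 < t := by linarith
      have := hg0 t (le_trans hT1T ht)
      positivity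
    · intro t ht
      have htp : t ≠ 0 := by linarith
      exact (((Real.hasDerivAt_rpow_const (p := 2 * (p - 1)) (Or.inl htp))).mul
        (hEnd t (le_trans hT1T ht))).const_add 1
    · intro t ht
      have htT := le_trans hT1T ht
      have htp : 0 < t := by linarith
      have hs : 0 < t ^ (p - 1) := Real.rpow_pos_of_pos htp _
      have e1 : t ^ (2 * (p - 1)) = (t ^ (p - 1)) ^ 2 := by
        rw [mul_comm, Real.rpow_mul htp.le]; norm_num
      have e2 : t ^ p = t ^ (p - 1) * t := by
        rw [Real.rpow_sub_one htp.ne']; field_simp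
      have e3 : t ^ (-3 : ℝ) = (t ^ 3)⁻¹ := by
        rw [Real.rpow_neg htp.le]; norm_num
      have e4 : t ^ (2 * (p - 1) - 1) = (t ^ (p - 1)) ^ 2 / t := by
        rw [Real.rpow_sub_one htp.ne', e1]
      rw [e1, e2, e3, e4]
      generalize t ^ (p - 1) = s at *
      have k1 := hEn'le t htT
      have k2 := hEnlow t ht
      have k3 := hW0 t htT
      have k4 := hg0 t htT
      have k5 : 2 * (p - 1) * (s ^ 2 / t) * En t + s ^ 2 * En' t
          ≤ s ^ 2 / t * (A * W t + t ^ 2 * (gn t * vn t)) := by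
        have : 2 * (p - 1) * (s ^ 2 / t) * En t + s ^ 2 * En' t
          = s ^ 2 / t * (2 * (p - 1) * En t + t * En' t) := by field_simp
        rw [this]
        exact mul_le_mul_of_nonneg_left (by linarith) (by positivity)
      refine k5.trans ?_
      have k6 : s ^ 2 / t * (A * W t) ≤ 2 * A * (t ^ 3)⁻¹ * (1 + s ^ 2 * En t) := by
        have q1 : s ^ 2 / t * (A * W t)
          = 2 * A * (t ^ 3)⁻¹ * (s ^ 2 * (t ^ 2 * W t / 2)) := by field_simp
        rw [q1]
        apply mul_le_mul_of_nonneg_left _ (by positivity)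
        have := mul_le_mul_of_nonneg_left
          (by linarith [sq_nonneg (vn t)] : t ^ 2 * W t / 2 ≤ En t) (sq_nonneg s)
        linarith
      have k7 : s ^ 2 / t * (t ^ 2 * (gn t * vn t)) ≤ 2 * (s * t * gn t) * (1 + s ^ 2 * En t) := by
        have q1 : s ^ 2 / t * (t ^ 2 * (gn t * vn t)) = 2 * (s * t * gn t) * (s * vn t / 2) := by
          field_simp
        rw [q1]
        apply mul_le_mul_of_nonneg_left _ (by positivity)
        have q2 : vn t ^ 2 / 2 ≤ En t := by
          have : 0 ≤ t ^ 2 * W t := by positivity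
          linarith
        have := mul_le_mul_of_nonneg_left q2 (sq_nonneg s)
        have q3 : 0 ≤ s ^ 2 * (vn t ^ 2 / 2) - s * vn t / 2 + 1 / 8 := by
          have : s ^ 2 * (vn t ^ 2 / 2) - s * vn t / 2 + 1 / 8 = (s * vn t - 1 / 2) ^ 2 / 2 := by
            ring
          rw [this]
          positivity
        linarith
      rw [mul_add, add_mul]
      linarith
    · intro t ht
      have htp : 0 < t := by linarith
      have k2 := hEnlow t ht
      have k3 := hW0 t (le_trans hT1T ht)
      have : 0 ≤ En t := le_trans (by positivity) k2
      positivity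
  have hC1 : 0 < C := by
    have htp : 0 < T₁ := by linarith
    have k2 := hEnlow T₁ le_rfl
    have k3 := hW0 T₁ hT1T
    have k4 : 0 ≤ En T₁ := le_trans (by positivity) k2
    have := hC T₁ le_rfl
    have : 0 ≤ T₁ ^ (2 * (p - 1)) * En T₁ := by positivity
    linarith
  refine ⟨2 * C, by positivity, T₁, hT1T, fun t ht => ?_⟩
  have htp : 0 < t := by linarith
  have k1 := hC t ht
  have k2 := hEnlow t ht
  have e1 : t ^ (2 * p) = t ^ (2 * (p - 1)) * t ^ 2 := by
    rw [← Real.rpow_natCast, ← Real.rpow_add htp]; congr 1; push_cast; ring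
  rw [Real.rpow_neg htp.le, ← div_eq_mul_inv, le_div_iff₀ (Real.rpow_pos_of_pos htp _), e1]
  have hq : 0 < t ^ (2 * (p - 1)) := Real.rpow_pos_of_pos htp _
  have := mul_le_mul_of_nonneg_left
    (by linarith [sq_nonneg (vn t)] : t ^ 2 * W t / 2 ≤ En t) hq.le
  linarith

theorem stmt_1
    {n : ℕ} (hn : 1 ≤ n)
    (F : EuclideanSpace ℝ (Fin n) → ℝ) (Fstar : ℝ)
    (Xstar : Set (EuclideanSpace ℝ (Fin n)))
    (hXstar : Xstar = {z | ∀ y, F z ≤ F y})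
    (hne : Xstar.Nonempty)
    (hFstar : ∀ z ∈ Xstar, F z = Fstar)
    (hconv : ConvexOn ℝ Set.univ F)
    (hdiff : Differentiable ℝ F)
    (α t₀ γ : ℝ) (hα : 0 < α) (ht₀ : 0 < t₀) (hγ : 1 ≤ γ) (hγ2 : γ ≤ 2)
    (g x x' x'' : ℝ → EuclideanSpace ℝ (Fin n))
    (hg : ContinuousOn g (Set.Ici t₀))
    (hx : ∀ t ∈ Set.Ici t₀, HasDerivAt x (x' t) t)
    (hx'd : ∀ t ∈ Set.Ici t₀, HasDerivAt x' (x'' t) t)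
    (hx''c : ContinuousOn x'' (Set.Ici t₀))
    (hode : ∀ t ∈ Set.Ici t₀, x'' t + (α / t) • x' t + gradient F (x t) = g t)
    (hH1 : ∀ z ∈ Xstar, ∃ η > 0, ∀ y : EuclideanSpace ℝ (Fin n),
      ‖y - z‖ < η → F y - Fstar ≤ (1 / γ) * ⟪gradient F y, y - z⟫)
    (hH2 : ∀ z ∈ Xstar, ∃ K > 0, ∃ ε > 0, ∀ y : EuclideanSpace ℝ (Fin n),
      ‖y - z‖ < ε → K * Metric.infDist y Xstar ^ (2 : ℝ) ≤ F y - Fstar)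
    (huniq : ∃ z, Xstar = {z})
    (hint : IntegrableOn (fun t : ℝ => t ^ (γ * α / (γ + 2)) * ‖g t‖) (Set.Ici t₀))
    (hαgt : 1 + 2 / γ < α) :
    ∃ C > 0, ∃ t₁ ≥ t₀, ∀ t ≥ t₁,
      F (x t) - Fstar ≤ C * t ^ (-(2 * γ * α / (γ + 2))) := by
  obtain ⟨z, hz⟩ := huniq
  have hzX : z ∈ Xstar := by rw [hz]; rfl
  have hFz : F z = Fstar := hFstar z hzX
  have hmin : ∀ y, F z ≤ F y := by
    have := hzX
    rw [hXstar] at this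
    exact this
  obtain ⟨η, hη, hH1⟩ := hH1 z hzX
  obtain ⟨K, hK, ε, hε, hH2⟩ := hH2 z hzX
  subst hFz
  have hH2' : ∀ y, ‖y - z‖ < ε → K * ‖y - z‖ ^ 2 ≤ F y - F z := by
    intro y hy
    have := hH2 y hy
    rw [hz, Metric.infDist_singleton, dist_eq_norm] at this
    simpa using this
  have hγα : 1 < γ * α / (γ + 2) := by
    have hγ0 : 0 < γ := by linarith
    have h1 : γ * (1 + 2 / γ) < γ * α := mul_lt_mul_of_pos_left hαgt hγ0
    have h2 : γ * (1 + 2 / γ) = γ + 2 := by field_simp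
    rw [lt_div_iff₀ (by linarith)]
    linarith
  have hgi : IntegrableOn (fun t => ‖g t‖) (Set.Ici t₀) := by
    have h1 := hint.const_mul (t₀ ^ (γ * α / (γ + 2)))⁻¹
    refine Integrable.mono' h1 (hg.norm.aestronglyMeasurable measurableSet_Ici) ?_
    refine (ae_restrict_iff' measurableSet_Ici).mpr (Filter.Eventually.of_forall ?_)
    intro t ht
    have h2 : t₀ ^ (γ * α / (γ + 2)) ≤ t ^ (γ * α / (γ + 2)) :=
      Real.rpow_le_rpow ht₀.le ht (by linarith)
    have h3 : 0 < t₀ ^ (γ * α / (γ + 2)) := Real.rpow_pos_of_pos ht₀ _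
    rw [norm_norm, inv_mul_eq_div, le_div_iff₀ h3, mul_comm]
    exact mul_le_mul_of_nonneg_right h2 (norm_nonneg _)
  have hco : ∀ r, 0 < r → r < ε → ∀ y, r ≤ ‖y - z‖ → K * r * ‖y - z‖ ≤ F y - F z := by
    intro r hr hrε y hy
    apply coercive F hconv z K r hr _ y hy
    intro y' hy'
    have := hH2' y' (by rw [hy']; exact hrε)
    rwa [hy'] at this
  have hdf := fun t (ht : t ≥ t₀) =>
    deriv_facts F hdiff z α t g x x' x'' (hx t ht) (hx'd t ht) (hode t ht)
  have hp1 : ∀ δ > 0, ∃ T ≥ t₀, ∀ t ≥ T, (F (x t) - F z) + ⟪x' t, x' t⟫ / 2 ≤ δ := by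
    intro δ hδ
    refine phase1 (fun t => F (x t) - F z) (fun t => ⟪x' t, x' t⟫) (fun t => ⟪x t - z, x' t⟫)
      (fun t => ‖x t - z‖) (fun t => ‖g t‖) (fun t => ‖x' t‖)
      (fun t => ⟪x' t, g t⟫ - α / t * ⟪x' t, x' t⟫)
      (fun t => ⟪x' t, x' t⟫ + ⟪x t - z, g t⟫ - α / t * ⟪x t - z, x' t⟫
        - ⟪gradient F (x t), x t - z⟫) t₀ α (ε / 2) (K * (ε / 2))⁻¹ ht₀ hα
      (by positivity) (by positivity) hg.norm hgi (fun t _ => norm_nonneg _)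
      (fun t _ => sub_nonneg.mpr (hmin _)) (fun t _ => norm_nonneg _)
      (fun t _ => (real_inner_self_eq_norm_sq _).symm) (fun t _ => norm_nonneg _)
      ?_ ?_ ?_ ?_ ?_ ?_ δ hδ
    · intro t ht
      have h0 : 0 ≤ F (x t) - F z := sub_nonneg.mpr (hmin _)
      rcases le_total (ε / 2) ‖x t - z‖ with h | h
      · have h1 := hco (ε / 2) (by positivity) (by linarith) (x t) h
        have h2 : ‖x t - z‖ ≤ (K * (ε / 2))⁻¹ * (F (x t) - F z) := by
          rw [inv_mul_eq_div, le_div_iff₀ (by positivity), mul_comm]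
          exact h1
        linarith
      · have h2 : 0 ≤ (K * (ε / 2))⁻¹ * (F (x t) - F z) := by positivity
        linarith
    · intro t ht
      obtain ⟨h1, h2, -, -⟩ := hdf t ht
      refine ((h1.sub_const (F z)).add (h2.div_const 2)).congr_deriv ?_
      ring
    · intro t ht
      have := real_inner_le_norm (x' t) (g t)
      rw [mul_comm] at this
      exact sub_le_sub_right this _
    · intro t ht
      exact (hdf t ht).2.2.1
    · intro t ht
      have h1 := real_inner_le_norm (x t - z) (g t)
      have h2 := convex_grad F hconv hdiff (x t) z
      linarith
    · intro t ht
      exact abs_real_inner_le_norm _ _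
  -- the trajectory enters every ball around the minimizer
  have hnear : ∃ T ≥ t₀, ∀ t ≥ T, ‖x t - z‖ < min η ε := by
    set r := min η ε / 2 with hr
    have hm : 0 < min η ε := lt_min hη hε
    have hr0 : 0 < r := by positivity
    have hrε : r < ε := by
      have := min_le_right η ε
      linarith
    obtain ⟨T, hT, h⟩ := hp1 (K * r * r / 2) (by positivity)
    refine ⟨T, hT, fun t ht => ?_⟩
    by_contra! hcon
    have h1 := hco r hr0 hrε (x t) (by linarith)
    have h2 := h t ht
    have h3 : 0 ≤ ⟪x' t, x' t⟫ := real_inner_self_nonneg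
    have h4 : K * r * r ≤ K * r * ‖x t - z‖ :=
      mul_le_mul_of_nonneg_left (by linarith) (by positivity)
    have h5 : 0 < K * r * r := by positivity
    linarith
  obtain ⟨T, hT, hTn⟩ := hnear
  have hsub : Set.Ici T ⊆ Set.Ici t₀ := Set.Ici_subset_Ici.mpr hT
  obtain ⟨C, hC, t₁, ht₁, hfin⟩ := phase2 (fun t => F (x t) - F z) (fun t => ⟪x' t, x' t⟫)
    (fun t => ⟪x t - z, x' t⟫) (fun t => ⟪x t - z, x t - z⟫) (fun t => ‖g t‖)
    (fun t => ‖(2 * α / (γ + 2)) • (x t - z) + t • x' t‖)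
    (fun t => ⟪gradient F (x t), x' t⟫) (fun t => ⟪x' t, g t⟫) (fun t => ⟪x t - z, g t⟫)
    (fun t => ⟪gradient F (x t), x t - z⟫) T α γ K (2 * α / (γ + 2)) (γ * α / (γ + 2))
    (by linarith) hK rfl rfl hγ hα hγα (hg.norm.mono hsub) (hint.mono_set hsub)
    (fun t _ => norm_nonneg _) (fun t _ => real_inner_self_nonneg)
    (fun t ht => (hdf t (le_trans hT ht)).1.sub_const _)
    (fun t ht => (hdf t (le_trans hT ht)).2.1)
    (fun t ht => (hdf t (le_trans hT ht)).2.2.1)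
    (fun t ht => (hdf t (le_trans hT ht)).2.2.2)
    (fun t ht => by
      have h1 := hH1 (x t) (lt_of_lt_of_le (hTn t ht) (min_le_left _ _))
      have hγ0 : 0 < γ := by linarith
      have h2 := mul_le_mul_of_nonneg_left h1 hγ0.le
      rwa [← mul_assoc, mul_one_div_cancel hγ0.ne', one_mul] at h2)
    (fun t ht => by
      have h1 := hH2' (x t) (lt_of_lt_of_le (hTn t ht) (min_le_right _ _))
      rwa [← real_inner_self_eq_norm_sq] at h1)
    (fun t ht => by
      rw [← real_inner_self_eq_norm_sq, real_inner_add_add_self]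
      simp only [real_inner_smul_left, real_inner_smul_right]
      ring)
    (fun t ht => by
      have h1 := real_inner_le_norm ((2 * α / (γ + 2)) • (x t - z) + t • x' t) (g t)
      rw [inner_add_left, real_inner_smul_left, real_inner_smul_left, mul_comm ‖_‖] at h1
      exact h1)
  refine ⟨C, hC, t₁, le_trans hT ht₁, fun t ht => ?_⟩
  have h1 := hfin t ht
  have e : 2 * γ * α / (γ + 2) = 2 * (γ * α / (γ + 2)) := by ring
  rw [e]
  exact h1
end

section
/- Let θ = 1, t₀ > 0, γ₁ > 2 and γ₂ ≥ γ₁, and suppose α ≥ (γ₁ + 2)/(γ₁ − 2). Let x : [t₀, ∞) → ℝⁿ be a solution of the unperturbed inertial ODE (g ≡ 0) with damping α/t. If F is coercive (F(x) → +∞ as ‖x‖ → ∞) and satisfies hypotheses H1(γ₁) and H2(γ₂), then there exist C > 0 and t₁ ≥ t₀ such that for all t ≥ t₁, F(x(t)) − F* ≤ C · t^{−2γ₂/(γ₂ − 2)}. -/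
open MeasureTheory
open scoped RealInnerProductSpace

namespace S6

open Filter Topology Set

/-- A function with nonpositive derivative on `[T, ∞)` is nonincreasing there. -/
lemma anti {φ φ' : ℝ → ℝ} {T : ℝ} (h : ∀ t ≥ T, HasDerivAt φ (φ' t) t)
    (h' : ∀ t ≥ T, φ' t ≤ 0) : ∀ t ≥ T, ∀ s ≥ t, φ s ≤ φ t := by
  have := antitoneOn_of_hasDerivWithinAt_nonpos (convex_Ici T) (f := φ) (f' := φ')
    (fun t ht => (h t ht).continuousAt.continuousWithinAt)
    (fun t ht => (h t (interior_subset ht)).hasDerivWithinAt)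
    (fun t ht => h' t (interior_subset ht))
  intro t ht s hs
  exact this ht (le_trans ht hs) hs

/-- Antiderivatives on a half line. -/
lemma antideriv {φ : ℝ → ℝ} {T : ℝ} (h : ContinuousOn φ (Ici T)) :
    ∃ Φ : ℝ → ℝ, Φ T = 0 ∧ ∀ t ≥ T, HasDerivAt Φ (φ t) t := by
  have hc : Continuous (fun t => φ (max t T)) := by
    apply h.comp_continuous (by fun_prop)
    intro t
    change T ≤ max t T
    exact le_max_right _ _
  refine ⟨fun t => ∫ s in T..t, φ (max s T), by simp, fun t ht => ?_⟩
  have := intervalIntegral.integral_hasDerivAt_right (hc.intervalIntegrable T t)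
    hc.stronglyMeasurable.stronglyMeasurableAtFilter hc.continuousAt
  simpa [max_eq_left ht] using this

/-- Gronwall type lemma. -/
lemma gron {L L' : ℝ → ℝ} {T κ C m : ℝ} (hT : 0 < T)
    (h : ∀ t ≥ T, HasDerivAt L (L' t) t) (hm : m < κ)
    (h' : ∀ t ≥ T, t * L' t ≤ -κ * L t + C * t ^ (-m)) :
    ∀ t ≥ T, L t ≤ C / (κ - m) * t ^ (-m) + (T ^ κ * (L T - C / (κ - m) * T ^ (-m))) * t ^ (-κ) := by
  have hkm : 0 < κ - m := by linarith
  have key := anti (T := T) (φ := fun t => t ^ κ * (L t - C / (κ - m) * t ^ (-m)))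
    (φ' := fun t => κ * t ^ (κ - 1) * (L t - C / (κ - m) * t ^ (-m))
      + t ^ κ * (L' t - C / (κ - m) * ((-m) * t ^ (-m - 1)))) ?_ ?_
  · intro t ht
    have ht0 : 0 < t := lt_of_lt_of_le hT ht
    have := key T le_rfl t ht
    have h1 : t ^ κ * t ^ (-κ) = 1 := by rw [← Real.rpow_add ht0]; simp
    have h2 : 0 < t ^ (-κ) := Real.rpow_pos_of_pos ht0 _
    have h3 := mul_le_mul_of_nonneg_right this h2.le
    have h4 : t ^ κ * (L t - C / (κ - m) * t ^ (-m)) * t ^ (-κ)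
      = (L t - C / (κ - m) * t ^ (-m)) := by
      rw [mul_right_comm, h1, one_mul]
    rw [h4] at h3
    linarith
  · intro t ht
    have ht0 : 0 < t := lt_of_lt_of_le hT ht
    have a1 := Real.hasDerivAt_rpow_const (x := t) (p := κ) (Or.inl ht0.ne')
    have a2 := Real.hasDerivAt_rpow_const (x := t) (p := -m) (Or.inl ht0.ne')
    exact a1.mul ((h t ht).sub (a2.const_mul _))
  · intro t ht
    have ht0 : 0 < t := lt_of_lt_of_le hT ht
    have e1 : t ^ κ = t ^ (κ - 1) * t := by
      rw [← Real.rpow_add_one ht0.ne']; ring_nf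
    have e2 : t ^ (-m) = t ^ (-m - 1) * t := by
      rw [← Real.rpow_add_one ht0.ne']; ring_nf
    have hp : 0 < t ^ (κ - 1) := Real.rpow_pos_of_pos ht0 _
    have := h' t ht
    rw [e1]
    have e3 : κ * t ^ (κ - 1) * (L t - C / (κ - m) * t ^ (-m))
      + t ^ (κ - 1) * t * (L' t - C / (κ - m) * ((-m) * t ^ (-m - 1)))
      = t ^ (κ - 1) * (κ * L t + t * L' t - (C / (κ - m) * (κ - m)) * t ^ (-m)) := by
      rw [e2]; ring
    rw [e3, div_mul_cancel₀ _ hkm.ne']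
    apply mul_nonpos_of_nonneg_of_nonpos hp.le
    linarith

section geom

variable {E : Type*} [NormedAddCommGroup E] [InnerProductSpace ℝ E]

/-- `a` is a relative interior point of `X` with radius `r`. -/
def RB (X : Set E) (a : E) (r : ℝ) : Prop :=
  0 < r ∧ ∀ p ∈ X, ∀ q ∈ X, ∀ c : ℝ, ‖c • (p - q)‖ ≤ r → a + c • (p - q) ∈ X

lemma RB.mem {X : Set E} {a : E} {r : ℝ} (h : RB X a r) (hX : X.Nonempty) : a ∈ X := by
  obtain ⟨p, hp⟩ := hX
  simpa using h.2 p hp p hp 0 (by simpa using h.1.le)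

lemma exists_RB [FiniteDimensional ℝ E] {X : Set E} (hc : Convex ℝ X) (hne : X.Nonempty) :
    ∃ a r, RB X a r := by
  obtain ⟨a, ha⟩ := hne.intrinsicInterior hc
  rw [mem_intrinsicInterior] at ha
  obtain ⟨y, hy, rfl⟩ := ha
  rw [mem_interior_iff_mem_nhds, Metric.mem_nhds_iff] at hy
  obtain ⟨ε, hε, hb⟩ := hy
  refine ⟨y, ε / 2, by linarith, ?_⟩
  intro p hp q hq c hcn
  have hmem : (y : E) + c • (p - q) ∈ affineSpan ℝ X := by
    have hd : c • (p - q) ∈ (affineSpan ℝ X).direction := by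
      apply Submodule.smul_mem
      exact AffineSubspace.vsub_mem_direction (subset_affineSpan ℝ X hp) (subset_affineSpan ℝ X hq)
    have := AffineSubspace.vadd_mem_of_mem_direction hd y.2
    rwa [vadd_eq_add, add_comm] at this
  have := @hb ⟨_, hmem⟩ (by
    rw [Metric.mem_ball, Subtype.dist_eq, dist_eq_norm]
    simp only [add_sub_cancel_left]
    linarith)
  exact this

lemma exists_good_dir {X : Set E} (hc : Convex ℝ X) {a z : E} {r : ℝ} (h : RB X a r)
    (hz : z ∈ X) :
    ∃ e r', RB X (z + e) r' ∧ ∀ p ∈ X, -(r' / 2) * ‖p - z‖ ≤ ⟪e, p - z⟫ := by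
  have hr := h.1
  set N : Set ℝ := {y | ∃ s : ℝ, 0 ≤ s ∧ ∃ p ∈ X, y = ‖(a - z) + s • (p - z)‖ ^ 2} with hN
  have hNne : N.Nonempty := ⟨_, 0, le_rfl, z, hz, rfl⟩
  have hNb : BddBelow N := ⟨0, by rintro y ⟨s, -, p, -, rfl⟩; positivity⟩
  obtain ⟨y, ⟨s, hs, p0, hp0, rfl⟩, hy⟩ :=
    exists_lt_of_csInf_lt hNne (show sInf N < sInf N + (r / 2) ^ 2 by
      have : 0 < (r / 2) ^ 2 := by positivity
      linarith)
  set e1 : E := (a - z) + s • (p0 - z) with he1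
  have h1s : 0 < 1 + s := by linarith
  have hdir : ∀ p ∈ X, -(r / 2) * ‖p - z‖ ≤ ⟪e1, p - z⟫ := by
    intro p hp
    rcases eq_or_lt_of_le (norm_nonneg (p - z)) with h0 | h0
    · have : p - z = 0 := norm_eq_zero.1 h0.symm
      simp [this]
    set τ : ℝ := (r / 2) / ‖p - z‖ with hτ
    have hτ0 : 0 < τ := by positivity
    have hst : 0 < s + τ := by linarith
    have hmem : ‖e1 + τ • (p - z)‖ ^ 2 ∈ N := by
      refine ⟨s + τ, hst.le, (s / (s + τ)) • p0 + (τ / (s + τ)) • p, ?_, ?_⟩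
      · apply hc hp0 hp (by positivity) (by positivity)
        field_simp
      · congr 2
        rw [he1, smul_sub (s + τ), smul_add (s + τ), smul_smul, smul_smul,
          mul_div_cancel₀ _ hst.ne', mul_div_cancel₀ _ hst.ne', smul_sub, smul_sub, add_smul]
        abel
    have h2 := csInf_le hNb hmem
    have h3 : ‖e1 + τ • (p - z)‖ ^ 2 = ‖e1‖ ^ 2 + 2 * (τ * ⟪e1, p - z⟫) + (τ * ‖p - z‖) ^ 2 := by
      rw [norm_add_sq_real, inner_smul_right, norm_smul, Real.norm_of_nonneg hτ0.le]
    have h4 : τ * ‖p - z‖ = r / 2 := by rw [hτ]; field_simp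
    rw [h4] at h3
    have h5 : -(2 * (r / 2) ^ 2) ≤ 2 * (τ * ⟪e1, p - z⟫) := by linarith
    have h6 : -(r / 2) * (r / 2) ≤ τ * ⟪e1, p - z⟫ := by nlinarith
    have h7 : τ * (-(r / 2) * ‖p - z‖) ≤ τ * ⟪e1, p - z⟫ := by
      calc τ * (-(r / 2) * ‖p - z‖) = -(r / 2) * (τ * ‖p - z‖) := by ring
        _ = -(r / 2) * (r / 2) := by rw [h4]
        _ ≤ _ := h6
    exact le_of_mul_le_mul_left h7 hτ0
  refine ⟨(1 + s)⁻¹ • e1, r / (1 + s), ⟨by positivity, ?_⟩, ?_⟩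
  · intro p hp q hq c hcn
    have hcn' : ‖((1 + s) * c) • (p - q)‖ ≤ r := by
      rw [mul_smul, norm_smul, Real.norm_of_nonneg h1s.le]
      calc (1 + s) * ‖c • (p - q)‖ ≤ (1 + s) * (r / (1 + s)) := by gcongr
        _ = r := by field_simp
    have hm := h.2 p hp q hq _ hcn'
    have hcomb := hc hm hp0 (show 0 ≤ (1 + s)⁻¹ by positivity) (show 0 ≤ s * (1 + s)⁻¹ by positivity)
      (by field_simp)
    convert hcomb using 1
    have hz' : z = (1 + s)⁻¹ • z + (s * (1 + s)⁻¹) • z := by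
      rw [← add_smul]
      have : (1 + s)⁻¹ + s * (1 + s)⁻¹ = 1 := by field_simp
      rw [this, one_smul]
    have hcc : c • (p - q) = (1 + s)⁻¹ • (((1 + s) * c) • (p - q)) := by
      rw [smul_smul]; congr 1; field_simp
    rw [hcc, he1]
    nth_rw 1 [hz']
    rw [smul_add, smul_add, smul_smul, smul_sub, smul_sub, mul_comm (1 + s)⁻¹ s]
    abel
  · intro p hp
    rw [real_inner_smul_left]
    have := hdir p hp
    calc -(r / (1 + s) / 2) * ‖p - z‖ = (1 + s)⁻¹ * (-(r / 2) * ‖p - z‖) := by field_simp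
      _ ≤ _ := by gcongr

/-- Metric projection onto a compact convex set. -/
lemma exists_proj {X : Set E} (hc : Convex ℝ X) (hne : X.Nonempty) (hK : IsCompact X) :
    ∃ P : E → E, (∀ y, P y ∈ X) ∧ (∀ y, ∀ w ∈ X, ⟪y - P y, w - P y⟫ ≤ 0) := by
  have h := exists_norm_eq_iInf_of_complete_convex hne hK.isComplete hc
  choose P hP hP' using h
  exact ⟨P, hP, fun y => (norm_eq_iInf_iff_real_inner_le_zero hc (hP y)).1 (hP' y)⟩

variable {X : Set E} {P : E → E}

lemma proj_mono (hP : ∀ y, P y ∈ X) (hP' : ∀ y, ∀ w ∈ X, ⟪y - P y, w - P y⟫ ≤ 0) (y w : E) :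
    ‖P y - P w‖ ^ 2 ≤ ⟪y - w, P y - P w⟫ := by
  have h1 := hP' y (P w) (hP w)
  have h2 := hP' w (P y) (hP y)
  have : ⟪y - w, P y - P w⟫ = ‖P y - P w‖ ^ 2 - ⟪y - P y, P w - P y⟫ - ⟪w - P w, P y - P w⟫ := by
    rw [← real_inner_self_eq_norm_sq]
    simp only [inner_sub_left, inner_sub_right]
    ring
  linarith

lemma proj_lip (hP : ∀ y, P y ∈ X) (hP' : ∀ y, ∀ w ∈ X, ⟪y - P y, w - P y⟫ ≤ 0) (y w : E) :
    ‖P y - P w‖ ≤ ‖y - w‖ := by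
  have h1 := proj_mono hP hP' y w
  have h2 := real_inner_le_norm (y - w) (P y - P w)
  by_contra! h
  nlinarith [norm_nonneg (y - w)]

lemma proj_min (hP' : ∀ y, ∀ w ∈ X, ⟪y - P y, w - P y⟫ ≤ 0) (y w : E) (hw : w ∈ X) :
    ‖y - P y‖ ≤ ‖y - w‖ := by
  have h1 := hP' y w hw
  have h2 : ‖y - w‖ ^ 2 = ‖y - P y‖ ^ 2 - 2 * ⟪y - P y, w - P y⟫ + ‖w - P y‖ ^ 2 := by
    rw [← norm_sub_sq_real]; congr 2; abel
  nlinarith [norm_nonneg (y - w), norm_nonneg (y - P y), norm_nonneg (w - P y)]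

lemma proj_self (hP' : ∀ y, ∀ w ∈ X, ⟪y - P y, w - P y⟫ ≤ 0) {y : E} (hy : y ∈ X) : P y = y := by
  have := proj_min hP' y y hy
  simp only [sub_self, norm_zero] at this
  have := norm_le_zero_iff.1 this
  exact (sub_eq_zero.1 this).symm

lemma proj_infDist (hne : X.Nonempty) (hP : ∀ y, P y ∈ X)
    (hP' : ∀ y, ∀ w ∈ X, ⟪y - P y, w - P y⟫ ≤ 0) (y : E) :
    Metric.infDist y X = ‖y - P y‖ := by
  apply le_antisymm
  · rw [← dist_eq_norm]; exact Metric.infDist_le_dist_of_mem (hP y)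
  · rw [Metric.le_infDist hne]
    intro w hw; rw [dist_eq_norm]; exact proj_min hP' y w hw

end geom

section dyn

variable {E : Type*} [NormedAddCommGroup E] [InnerProductSpace ℝ E]

/-- The trajectory data along `[T, ∞)`. -/
structure Dyn (α T : ℝ) (X : Set E) (x v g : ℝ → E) (f : ℝ → ℝ) : Prop where
  hT : 0 < T
  hα : 1 < α
  dx : ∀ t ≥ T, HasDerivAt x (v t) t
  dv : ∀ t ≥ T, HasDerivAt v (-(α / t) • v t - g t) t
  df : ∀ t ≥ T, HasDerivAt f ⟪g t, v t⟫ t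
  f0 : ∀ t ≥ T, 0 ≤ f t
  cv : ∀ t ≥ T, ∀ a ∈ X, f t ≤ ⟪g t, x t - a⟫

/-- Mechanical energy. -/
noncomputable def W (f : ℝ → ℝ) (v : ℝ → E) (t : ℝ) : ℝ := f t + ‖v t‖ ^ 2 / 2

variable {α T : ℝ} {X : Set E} {x v g : ℝ → E} {f : ℝ → ℝ}

lemma Dyn.mono (h : Dyn α T X x v g f) {T' : ℝ} (hT' : T ≤ T') : Dyn α T' X x v g f where
  hT := lt_of_lt_of_le h.hT hT'
  hα := h.hα
  dx := fun t ht => h.dx t (le_trans hT' ht)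
  dv := fun t ht => h.dv t (le_trans hT' ht)
  df := fun t ht => h.df t (le_trans hT' ht)
  f0 := fun t ht => h.f0 t (le_trans hT' ht)
  cv := fun t ht => h.cv t (le_trans hT' ht)

lemma Dyn.pos (h : Dyn α T X x v g f) {t : ℝ} (ht : t ≥ T) : 0 < t := lt_of_lt_of_le h.hT ht

lemma Dyn.dW (h : Dyn α T X x v g f) {t : ℝ} (ht : t ≥ T) :
    HasDerivAt (W f v) (-(α / t) * ‖v t‖ ^ 2) t := by
  have h1 := (h.df t ht).add (((h.dv t ht).norm_sq).div_const 2)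
  refine HasDerivAt.congr_deriv (f := W f v) h1 ?_
  rw [inner_sub_right, inner_smul_right, real_inner_self_eq_norm_sq, real_inner_comm (g t) (v t)]
  ring

lemma Dyn.dk (h : Dyn α T X x v g f) (a : E) {t : ℝ} (ht : t ≥ T) :
    HasDerivAt (fun t => ‖x t - a‖ ^ 2 / 2) ⟪x t - a, v t⟫ t := by
  have h1 := (((h.dx t ht).sub_const a).norm_sq).div_const 2
  refine h1.congr_deriv ?_
  ring

lemma Dyn.dk' (h : Dyn α T X x v g f) (a : E) {t : ℝ} (ht : t ≥ T) :
    HasDerivAt (fun t => ⟪x t - a, v t⟫)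
      (‖v t‖ ^ 2 - α / t * ⟪x t - a, v t⟫ - ⟪g t, x t - a⟫) t := by
  have h1 := ((h.dx t ht).sub_const a).inner ℝ (h.dv t ht)
  refine h1.congr_deriv ?_
  rw [inner_sub_right, inner_smul_right, real_inner_self_eq_norm_sq,
    real_inner_comm (g t) (x t - a)]
  ring

lemma Dyn.W0 (h : Dyn α T X x v g f) {t : ℝ} (ht : t ≥ T) : 0 ≤ W f v t := by
  have := h.f0 t ht
  unfold W; positivity

lemma Dyn.Wanti (h : Dyn α T X x v g f) : ∀ t ≥ T, ∀ s ≥ t, W f v s ≤ W f v t := by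
  apply anti (fun t ht => h.dW ht)
  intro t ht
  have := h.pos ht
  have := h.hα
  have : 0 ≤ α / t * ‖v t‖ ^ 2 := by positivity
  linarith

lemma Dyn.Wcont (h : Dyn α T X x v g f) : ContinuousOn (W f v) (Ici T) :=
  fun _ ht => (h.dW ht).continuousAt.continuousWithinAt

/-- Stage 0: the energy becomes arbitrarily small. -/
lemma Dyn.W_small (h : Dyn α T X x v g f) {a : E} (ha : a ∈ X) {M : ℝ}
    (hM : ∀ t ≥ T, ‖x t - a‖ ≤ M) {ε : ℝ} (hε : 0 < ε) : ∃ T' ≥ T, ∀ t ≥ T', W f v t ≤ ε := by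
  have hT := h.hT
  have hα := h.hα
  have hα0 : 0 < α := by linarith
  obtain ⟨Z, hZT, hZ⟩ := antideriv (T := T) (φ := fun s => W f v s * s⁻¹)
    (h.Wcont.mul (continuousOn_inv₀.mono (fun s hs => (h.pos hs).ne')))
  have hM0 : 0 ≤ M := le_trans (norm_nonneg _) (hM T le_rfl)
  set V : ℝ := Real.sqrt (2 * W f v T) with hV
  have hvV : ∀ t ≥ T, ‖v t‖ ≤ V := by
    intro t ht
    apply Real.le_sqrt_of_sq_le
    have h1 := h.Wanti T le_rfl t ht
    have h2 := h.f0 t ht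
    unfold W at h1 ⊢
    linarith
  have hV0 : 0 ≤ V := Real.sqrt_nonneg _
  have hk : ∀ t ≥ T, |⟪x t - a, v t⟫| ≤ M * V := by
    intro t ht
    refine le_trans (abs_real_inner_le_norm _ _) ?_
    exact mul_le_mul (hM t ht) (hvV t ht) (norm_nonneg _) hM0
  set C : ℝ := (1 + α) * (M * V) with hC
  have hC0 : 0 ≤ C := by positivity
  set Λ : ℝ → ℝ := fun t => t⁻¹ * ⟪x t - a, v t⟫ + 3 / (2 * α) * W f v t + Z t + C * t⁻¹ with hΛ
  have hanti : ∀ t ≥ T, ∀ s ≥ t, Λ s ≤ Λ t := by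
    apply anti (φ' := fun t => (-(t ^ 2)⁻¹ * ⟪x t - a, v t⟫
      + t⁻¹ * (‖v t‖ ^ 2 - α / t * ⟪x t - a, v t⟫ - ⟪g t, x t - a⟫))
      + 3 / (2 * α) * (-(α / t) * ‖v t‖ ^ 2) + W f v t * t⁻¹ + C * (-(t ^ 2)⁻¹))
    · intro t ht
      have ht0 := h.pos ht
      exact ((((hasDerivAt_inv ht0.ne').mul (h.dk' a ht)).add ((h.dW ht).const_mul _)).add
        (hZ t ht)).add ((hasDerivAt_inv ht0.ne').const_mul C)
    · intro t ht
      have ht0 := h.pos ht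
      have h1 := h.cv t ht a ha
      have h2 := (abs_le.1 (hk t ht)).1
      have e : (-(t ^ 2)⁻¹ * ⟪x t - a, v t⟫
        + t⁻¹ * (‖v t‖ ^ 2 - α / t * ⟪x t - a, v t⟫ - ⟪g t, x t - a⟫))
        + 3 / (2 * α) * (-(α / t) * ‖v t‖ ^ 2) + W f v t * t⁻¹ + C * (-(t ^ 2)⁻¹)
        = t⁻¹ * (f t - ⟪g t, x t - a⟫) + (t ^ 2)⁻¹ * (-((1 + α) * ⟪x t - a, v t⟫) - C) := by
        unfold W; field_simp; ring
      rw [e]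
      have h3 : t⁻¹ * (f t - ⟪g t, x t - a⟫) ≤ 0 :=
        mul_nonpos_of_nonneg_of_nonpos (by positivity) (by linarith)
      have h4 : (t ^ 2)⁻¹ * (-((1 + α) * ⟪x t - a, v t⟫) - C) ≤ 0 := by
        apply mul_nonpos_of_nonneg_of_nonpos (by positivity)
        rw [hC]; nlinarith
      linarith
  have hZlog : ∀ t ≥ T, W f v t * Real.log (t / T) ≤ Z t := by
    have := anti (T := T) (φ := fun t => W f v t * Real.log (t / T) - Z t)
      (φ' := fun t => (-(α / t) * ‖v t‖ ^ 2) * Real.log (t / T) + W f v t * t⁻¹ - W f v t * t⁻¹) ?_ ?_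
    · intro t ht
      have h1 := this T le_rfl t ht
      simp only [div_self hT.ne', Real.log_one, mul_zero, hZT] at h1
      linarith
    · intro t ht
      have ht0 := h.pos ht
      have hl : HasDerivAt (fun t => Real.log (t / T)) (t⁻¹) t := by
        have := ((hasDerivAt_id t).div_const T).log (by simp; exact ⟨ht0.ne', hT.ne'⟩)
        refine this.congr_deriv ?_
        simp only [id]
        field_simp
      exact ((h.dW ht).mul hl).sub (hZ t ht)
    · intro t ht
      have ht0 := h.pos ht
      have hl : 0 ≤ Real.log (t / T) := Real.log_nonneg (by rw [le_div_iff₀ hT]; linarith)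
      have : 0 ≤ α / t * ‖v t‖ ^ 2 * Real.log (t / T) := by positivity
      linarith
  set B : ℝ := |Λ T| + T⁻¹ * (M * V) with hB
  have hB0 : 0 ≤ B := by positivity
  have hZB : ∀ t ≥ T, Z t ≤ B := by
    intro t ht
    have ht0 := h.pos ht
    have h1 := hanti T le_rfl t ht
    have h2 := (abs_le.1 (hk t ht)).1
    have h3 := h.W0 ht
    have h4 : -(T⁻¹ * (M * V)) ≤ t⁻¹ * ⟪x t - a, v t⟫ := by
      have : t⁻¹ * (M * V) ≤ T⁻¹ * (M * V) := by gcongr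
      have : t⁻¹ * -(M * V) ≤ t⁻¹ * ⟪x t - a, v t⟫ := by gcongr
      linarith
    have h5 : 0 ≤ 3 / (2 * α) * W f v t := by positivity
    have h6 : 0 ≤ C * t⁻¹ := by positivity
    have h7 := le_abs_self (Λ T)
    have h8 : Λ t = t⁻¹ * ⟪x t - a, v t⟫ + 3 / (2 * α) * W f v t + Z t + C * t⁻¹ := rfl
    linarith
  refine ⟨T * Real.exp (B / ε + 1), ?_, ?_⟩
  · have : 1 ≤ Real.exp (B / ε + 1) := Real.one_le_exp (by positivity)
    nlinarith
  · intro t ht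
    have hTt : t ≥ T := by
      have : 1 ≤ Real.exp (B / ε + 1) := Real.one_le_exp (by positivity)
      nlinarith
    have ht0 := h.pos hTt
    have hl : B / ε + 1 ≤ Real.log (t / T) := by
      rw [Real.le_log_iff_exp_le (by positivity), le_div_iff₀ hT]; linarith
    have h1 := hZlog t hTt
    have h2 := hZB t hTt
    by_contra! hc
    have : ε * (B / ε + 1) ≤ W f v t * Real.log (t / T) :=
      mul_le_mul hc.le hl (by positivity) (by linarith)
    have e : ε * (B / ε + 1) = B + ε := by field_simp
    linarith

/-- Stage 1: integrability of `t W(t)`. -/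
lemma Dyn.Z_bdd {lam γ r M : ℝ} (h : Dyn α T X x v g f) (hαl : α = 2 * lam + 1)
    (hγ : 2 ≤ lam * (γ - 2)) {P : E → E} (hP : ∀ y, P y ∈ X)
    (hP' : ∀ y, ∀ w ∈ X, ⟪y - P y, w - P y⟫ ≤ 0) {a0 : E} (hRB : RB X a0 r)
    (hM : ∀ t ≥ T, ‖x t - a0‖ ≤ M)
    (hH : ∀ t ≥ T, ∃ z ∈ X, ‖x t - z‖ ≤ r / 2 ∧ γ * f t ≤ ⟪g t, x t - z⟫)
    {Z : ℝ → ℝ} (hZ : ∀ t ≥ T, HasDerivAt Z (t * W f v t) t) : ∃ C, ∀ t ≥ T, Z t ≤ C := by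
  have hl : 0 < lam := by have := h.hα; linarith
  have hT := h.hT
  have hr := hRB.1
  -- the energy with a fixed anchor
  set G : E → ℝ → ℝ := fun a t => t ^ 2 * W f v t + lam * (t * ⟪x t - a, v t⟫)
    + 2 * lam ^ 2 * (‖x t - a‖ ^ 2 / 2) + lam / 2 * (t * ⟪x t - a0, v t⟫)
    + lam ^ 2 * (‖x t - a0‖ ^ 2 / 2) + lam * Z t with hG
  set GP : ℝ → ℝ := fun t => G (P (x t)) t with hGP
  have hGd : ∀ a, ∀ t ≥ T, HasDerivAt (G a) (2 * t * W f v t + t ^ 2 * (-(α / t) * ‖v t‖ ^ 2)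
      + lam * (1 * ⟪x t - a, v t⟫
        + t * (‖v t‖ ^ 2 - α / t * ⟪x t - a, v t⟫ - ⟪g t, x t - a⟫))
      + 2 * lam ^ 2 * ⟪x t - a, v t⟫
      + lam / 2 * (1 * ⟪x t - a0, v t⟫
        + t * (‖v t‖ ^ 2 - α / t * ⟪x t - a0, v t⟫ - ⟪g t, x t - a0⟫))
      + lam ^ 2 * ⟪x t - a0, v t⟫ + lam * (t * W f v t)) t := by
    intro a t ht
    have hsq : HasDerivAt (fun t : ℝ => t ^ 2) (2 * t) t := by simpa using hasDerivAt_pow 2 t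
    exact (((((hsq.mul (h.dW ht)).add (((hasDerivAt_id t).mul (h.dk' a ht)).const_mul lam)).add
      ((h.dk a ht).const_mul _)).add (((hasDerivAt_id t).mul (h.dk' a0 ht)).const_mul _)).add
      ((h.dk a0 ht).const_mul _)).add ((hZ t ht).const_mul _)
  have hGneg : ∀ t ≥ T, (2 * t * W f v t + t ^ 2 * (-(α / t) * ‖v t‖ ^ 2)
      + lam * (1 * ⟪x t - P (x t), v t⟫
        + t * (‖v t‖ ^ 2 - α / t * ⟪x t - P (x t), v t⟫ - ⟪g t, x t - P (x t)⟫))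
      + 2 * lam ^ 2 * ⟪x t - P (x t), v t⟫
      + lam / 2 * (1 * ⟪x t - a0, v t⟫
        + t * (‖v t‖ ^ 2 - α / t * ⟪x t - a0, v t⟫ - ⟪g t, x t - a0⟫))
      + lam ^ 2 * ⟪x t - a0, v t⟫ + lam * (t * W f v t)) ≤ 0 := by
    intro t ht
    have ht0 := h.pos ht
    obtain ⟨z, hz, hxz, hzγ⟩ := hH t ht
    have hPz : ‖P (x t) - z‖ ≤ r / 2 := by
      have := proj_lip hP hP' (x t) z
      rw [proj_self hP' hz] at this
      linarith
    have hmem := hRB.2 (P (x t)) (hP _) z hz 2 (by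
      rw [norm_smul]; norm_num; linarith)
    have hc := h.cv t ht _ hmem
    have hf0 := h.f0 t ht
    have e1 : ⟪g t, x t - (a0 + (2 : ℝ) • (P (x t) - z))⟫
        = ⟪g t, x t - a0⟫ - 2 * (⟪g t, x t - z⟫ - ⟪g t, x t - P (x t)⟫) := by
      simp only [inner_sub_right, inner_add_right, inner_smul_right]; ring
    rw [e1] at hc
    have key : γ * f t - ⟪g t, x t - a0⟫ / 2 ≤ ⟪g t, x t - P (x t)⟫ := by linarith
    have e2 : (2 * t * W f v t + t ^ 2 * (-(α / t) * ‖v t‖ ^ 2)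
      + lam * (1 * ⟪x t - P (x t), v t⟫
        + t * (‖v t‖ ^ 2 - α / t * ⟪x t - P (x t), v t⟫ - ⟪g t, x t - P (x t)⟫))
      + 2 * lam ^ 2 * ⟪x t - P (x t), v t⟫
      + lam / 2 * (1 * ⟪x t - a0, v t⟫
        + t * (‖v t‖ ^ 2 - α / t * ⟪x t - a0, v t⟫ - ⟪g t, x t - a0⟫))
      + lam ^ 2 * ⟪x t - a0, v t⟫ + lam * (t * W f v t))
      = t * ((2 + lam) * f t - lam * (⟪g t, x t - P (x t)⟫ + ⟪g t, x t - a0⟫ / 2)) := by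
      rw [hαl]; unfold W; field_simp; ring
    rw [e2]
    apply mul_nonpos_of_nonneg_of_nonpos ht0.le
    have h3 : lam * (γ * f t) ≤ lam * (⟪g t, x t - P (x t)⟫ + ⟪g t, x t - a0⟫ / 2) := by
      gcongr; linarith
    have h4 : 2 * f t ≤ lam * (γ - 2) * f t := by gcongr
    nlinarith [mul_nonneg hl.le hf0]
  have hxc : ContinuousOn x (Ici T) := fun t ht => (h.dx t ht).continuousAt.continuousWithinAt
  have hvc : ContinuousOn v (Ici T) := fun t ht => (h.dv t ht).continuousAt.continuousWithinAt
  have hZc : ContinuousOn Z (Ici T) := fun t ht => (hZ t ht).continuousAt.continuousWithinAt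
  have hWc := h.Wcont
  have hPc : Continuous P := by
    have : LipschitzWith 1 P := LipschitzWith.of_dist_le_mul (fun y w => by
      simpa [dist_eq_norm] using proj_lip hP hP' y w)
    exact this.continuous
  have hPx : ContinuousOn (fun t => P (x t)) (Ici T) := hPc.comp_continuousOn hxc
  have hGc : ContinuousOn GP (Ici T) := by
    simp only [hGP, hG]
    fun_prop
  have hdec : ∀ t ≥ T, GP t ≤ GP T := by
    intro t ht
    refine image_le_of_liminf_slope_right_le_deriv_boundary (f := GP) (a := T) (b := t)
      (B := fun _ => GP T) (B' := fun _ => 0) (hGc.mono Icc_subset_Ici_self) le_rfl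
      continuousOn_const (fun s _ => hasDerivWithinAt_const _ _ _) ?_ ⟨ht, le_rfl⟩
    intro s hs ρ hρ
    have hsT : s ≥ T := hs.1
    apply Eventually.frequently
    have t1 : Tendsto (slope (G (P (x s))) s) (𝓝[>] s) (𝓝 _) :=
      ((hasDerivAt_iff_tendsto_slope.1 (hGd (P (x s)) s hsT)).mono_left
        (nhdsWithin_mono _ (fun y hy => ne_of_gt hy)))
    have t2 : Tendsto (slope x s) (𝓝[>] s) (𝓝 (v s)) :=
      ((hasDerivAt_iff_tendsto_slope.1 (h.dx s hsT)).mono_left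
        (nhdsWithin_mono _ (fun y hy => ne_of_gt hy)))
    have t3 : Tendsto v (𝓝[>] s) (𝓝 (v s)) :=
      (h.dv s hsT).continuousAt.tendsto.mono_left nhdsWithin_le_nhds
    have t4 : Tendsto (fun y : ℝ => y) (𝓝[>] s) (𝓝 s) := nhdsWithin_le_nhds
    have t5 := t1.add ((t4.const_mul lam).mul (t2.norm.mul (t3.sub t2).norm))
    have t6 := t5.eventually_lt_const (u := ρ) (by
      simp only [sub_self, norm_zero, mul_zero, add_zero]
      exact lt_of_le_of_lt (hGneg s hsT) hρ)
    filter_upwards [t6, self_mem_nhdsWithin] with y hy hys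
    refine lt_of_le_of_lt ?_ hy
    have hys0 : 0 < y - s := sub_pos.2 hys
    have hyT : y ≥ T := le_trans hsT (le_of_lt hys)
    have hy0 := h.pos hyT
    rw [slope_def_field, slope_def_field, ← sub_le_iff_le_add', ← sub_div, div_le_iff₀ hys0]
    have hGs : GP s = G (P (x s)) s := rfl
    rw [hGs, sub_sub_sub_cancel_right]
    have hxs : (y - s) • slope x s y = x y - x s := by
      rw [slope_def_module, smul_smul, mul_inv_cancel₀ hys0.ne', one_smul]
    set Δ := P (x y) - P (x s) with hΔ
    have m1 := proj_mono hP hP' (x y) (x s)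
    have m2 := proj_lip hP hP' (x y) (x s)
    have m3 := proj_min hP' (x y) (P (x s)) (hP _)
    rw [← hΔ] at m1 m2
    rw [← hxs, norm_smul, Real.norm_of_nonneg hys0.le] at m2
    have m1' : 0 ≤ ⟪slope x s y, Δ⟫ := by
      rw [← hxs, real_inner_smul_left] at m1
      have : 0 ≤ (y - s) * ⟪slope x s y, Δ⟫ := le_trans (by positivity) m1
      exact nonneg_of_mul_nonneg_right this hys0
    have m4 : ⟪Δ, v y⟫ = ⟪slope x s y, Δ⟫ + ⟪Δ, v y - slope x s y⟫ := by
      have q1 := inner_sub_right (𝕜 := ℝ) Δ (v y) (slope x s y)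
      have q2 := real_inner_comm Δ (slope x s y)
      linarith
    have m5 := (abs_le.1 (abs_real_inner_le_norm Δ (v y - slope x s y))).1
    have m6 : ‖Δ‖ * ‖v y - slope x s y‖ ≤ (y - s) * ‖slope x s y‖ * ‖v y - slope x s y‖ := by
      gcongr
    have m7 : ‖x y - P (x y)‖ ^ 2 ≤ ‖x y - P (x s)‖ ^ 2 := by gcongr
    have m8 : GP y - G (P (x s)) y = -(lam * y) * ⟪Δ, v y⟫
        + lam ^ 2 * (‖x y - P (x y)‖ ^ 2 - ‖x y - P (x s)‖ ^ 2) := by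
      simp only [hGP, hG, hΔ, inner_sub_left]; ring
    rw [m8]
    have m9 : -((y - s) * ‖slope x s y‖ * ‖v y - slope x s y‖) ≤ ⟪Δ, v y⟫ := by linarith
    have m10 : lam * y * (-((y - s) * ‖slope x s y‖ * ‖v y - slope x s y‖))
      ≤ lam * y * ⟪Δ, v y⟫ := by gcongr
    have m11 : lam ^ 2 * (‖x y - P (x y)‖ ^ 2 - ‖x y - P (x s)‖ ^ 2) ≤ 0 :=
      mul_nonpos_of_nonneg_of_nonpos (by positivity) (by linarith)
    linarith
  refine ⟨(GP T + (lam * M / 2) ^ 2) / lam, fun t ht => ?_⟩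
  rw [le_div_iff₀ hl]
  have h1 := hdec t ht
  have ht0 := h.pos ht
  have hf0 := h.f0 t ht
  have h2 := (abs_le.1 (abs_real_inner_le_norm (x t - P (x t)) (v t))).1
  have h3 := (abs_le.1 (abs_real_inner_le_norm (x t - a0) (v t))).1
  have h4 : ‖x t - a0‖ * ‖v t‖ ≤ M * ‖v t‖ := by gcongr; exact hM t ht
  have h5 : GP t = t ^ 2 * (f t + ‖v t‖ ^ 2 / 2) + lam * (t * ⟪x t - P (x t), v t⟫)
    + 2 * lam ^ 2 * (‖x t - P (x t)‖ ^ 2 / 2) + lam / 2 * (t * ⟪x t - a0, v t⟫)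
    + lam ^ 2 * (‖x t - a0‖ ^ 2 / 2) + lam * Z t := rfl
  have h6 : lam * (t * -(‖x t - P (x t)‖ * ‖v t‖)) ≤ lam * (t * ⟪x t - P (x t), v t⟫) := by gcongr
  have h7 : lam / 2 * (t * -(M * ‖v t‖)) ≤ lam / 2 * (t * ⟪x t - a0, v t⟫) := by
    gcongr; linarith
  have h8 : 0 ≤ t ^ 2 * f t := by positivity
  have h9 : 0 ≤ lam ^ 2 * (‖x t - a0‖ ^ 2 / 2) := by positivity
  nlinarith [sq_nonneg (t * ‖v t‖ / 2 - lam * ‖x t - P (x t)‖), sq_nonneg (t * ‖v t‖ / 2 - lam * M / 2)]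

lemma conv_of_anti {φ : ℝ → ℝ} {T c : ℝ} (h : ∀ t ≥ T, ∀ s ≥ t, φ s ≤ φ t) (hb : ∀ t ≥ T, c ≤ φ t) :
    ∃ l, Tendsto φ atTop (𝓝 l) := by
  have hanti : Antitone (fun t => φ (max t T)) := fun s t hst =>
    h _ (le_max_right _ _) _ (max_le_max_right _ hst)
  have := tendsto_atTop_ciInf hanti ⟨c, by rintro _ ⟨t, rfl⟩; exact hb _ (le_max_right _ _)⟩
  refine ⟨_, this.congr' ?_⟩
  filter_upwards [eventually_ge_atTop T] with t ht
  rw [max_eq_left ht]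

/-- Stage 1b: distances to minimizers converge. -/
lemma Dyn.dist_conv {C M : ℝ} (h : Dyn α T X x v g f) {Z : ℝ → ℝ}
    (hZ : ∀ t ≥ T, HasDerivAt Z (t * W f v t) t) (hZC : ∀ t ≥ T, Z t ≤ C) {a : E} (ha : a ∈ X)
    (hM : ∀ t ≥ T, ‖x t - a‖ ≤ M) : ∃ l, Tendsto (fun t => ‖x t - a‖ ^ 2 / 2) atTop (𝓝 l) := by
  have hT := h.hT
  have hα := h.hα
  have hM0 : 0 ≤ M := le_trans (norm_nonneg _) (hM T le_rfl)
  have hZn : ∀ t ≥ T, ∀ s ≥ t, -Z s ≤ -Z t :=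
    anti (φ' := fun t => -(t * W f v t)) (fun t ht => (hZ t ht).neg) (fun t ht => by
      have := h.pos ht
      have := h.W0 ht
      have : 0 ≤ t * W f v t := by positivity
      linarith)
  obtain ⟨l, hl⟩ := conv_of_anti hZn (c := -C) (fun t ht => by have := hZC t ht; linarith)
  -- quadratic decay
  have hq : ∀ t, t / 2 ≥ T → 3 / 8 * (t ^ 2 * W f v t) ≤ Z t - Z (t / 2) := by
    intro t ht
    have ht0 := h.pos ht
    have hd := h.mono ht
    have := anti (T := t / 2) (φ := fun s => W f v s * ((s ^ 2 - (t / 2) ^ 2) / 2) - Z s)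
      (φ' := fun s => (-(α / s) * ‖v s‖ ^ 2) * ((s ^ 2 - (t / 2) ^ 2) / 2)
        + W f v s * ((2 * s) / 2) - s * W f v s) ?_ ?_ (t / 2) le_rfl t (by linarith)
    · simp only [sub_self, zero_div, mul_zero] at this
      nlinarith
    · intro s hs
      have hsq : HasDerivAt (fun t : ℝ => t ^ 2) (2 * s) s := by simpa using hasDerivAt_pow 2 s
      exact ((hd.dW hs).mul ((hsq.sub_const _).div_const 2)).sub (hZ s (le_trans ht hs))
    · intro s hs
      have hs0 := hd.pos hs
      have : 0 ≤ (s ^ 2 - (t / 2) ^ 2) / 2 := by nlinarith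
      have : 0 ≤ (α / s * ‖v s‖ ^ 2) * ((s ^ 2 - (t / 2) ^ 2) / 2) := by positivity
      nlinarith
  have hhalf : Tendsto (fun t : ℝ => t / 2) atTop atTop :=
    tendsto_id.atTop_div_const (by norm_num)
  have hZd : Tendsto (fun t => Z t - Z (t / 2)) atTop (𝓝 0) := by
    have h1 := (hl.comp hhalf).sub hl
    simp only [sub_self] at h1
    refine h1.congr (fun t => ?_)
    simp only [Function.comp]; ring
  have hWq : Tendsto (fun t => t ^ 2 * ‖v t‖ ^ 2) atTop (𝓝 0) := by
    have h2 : Tendsto (fun t => 16 / 3 * (Z t - Z (t / 2))) atTop (𝓝 0) := by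
      simpa using hZd.const_mul (16 / 3)
    refine tendsto_of_tendsto_of_tendsto_of_le_of_le' tendsto_const_nhds h2 ?_ ?_
    · exact Eventually.of_forall (fun t => by positivity)
    · filter_upwards [eventually_ge_atTop (2 * T)] with t ht
      have h3 := hq t (by linarith)
      have h4 := h.f0 t (by linarith)
      have : 0 ≤ t ^ 2 * f t := by positivity
      unfold W at h3
      nlinarith
  have htv : Tendsto (fun t => t * ‖v t‖) atTop (𝓝 0) := by
    have h1 := hWq.sqrt
    rw [Real.sqrt_zero] at h1
    refine h1.congr' ?_
    filter_upwards [eventually_ge_atTop T] with t ht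
    rw [← mul_pow, Real.sqrt_sq (mul_nonneg (h.pos ht).le (norm_nonneg _))]
  have htk : Tendsto (fun t => t * ⟪x t - a, v t⟫) atTop (𝓝 0) := by
    have h2 : Tendsto (fun t => M * (t * ‖v t‖)) atTop (𝓝 0) := by simpa using htv.const_mul M
    refine squeeze_zero_norm' ?_ h2
    filter_upwards [eventually_ge_atTop T] with t ht
    have ht0 := h.pos ht
    rw [norm_mul, Real.norm_of_nonneg ht0.le]
    have h3 : ‖⟪x t - a, v t⟫‖ ≤ M * ‖v t‖ :=
      le_trans (norm_inner_le_norm _ _) (by gcongr; exact hM t ht)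
    calc t * ‖⟪x t - a, v t⟫‖ ≤ t * (M * ‖v t‖) := by gcongr
      _ = _ := by ring
  have hbd : ∀ᶠ t in atTop, -1 < t * ⟪x t - a, v t⟫ := htk.eventually_const_lt (by norm_num)
  obtain ⟨T1, hT1⟩ := eventually_atTop.1 hbd
  set Λ : ℝ → ℝ := fun t => t * ⟪x t - a, v t⟫ + (α - 1) * (‖x t - a‖ ^ 2 / 2) - 2 * Z t with hΛ
  have hLa : ∀ t ≥ T, ∀ s ≥ t, Λ s ≤ Λ t := by
    apply anti (φ' := fun t => 1 * ⟪x t - a, v t⟫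
      + t * (‖v t‖ ^ 2 - α / t * ⟪x t - a, v t⟫ - ⟪g t, x t - a⟫)
      + (α - 1) * ⟪x t - a, v t⟫ - 2 * (t * W f v t))
    · intro t ht
      exact (((hasDerivAt_id t).mul (h.dk' a ht)).add ((h.dk a ht).const_mul _)).sub
        ((hZ t ht).const_mul 2)
    · intro t ht
      have ht0 := h.pos ht
      have h1 := h.cv t ht a ha
      have h2 := h.f0 t ht
      have e : 1 * ⟪x t - a, v t⟫
        + t * (‖v t‖ ^ 2 - α / t * ⟪x t - a, v t⟫ - ⟪g t, x t - a⟫)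
        + (α - 1) * ⟪x t - a, v t⟫ - 2 * (t * W f v t) = t * (-⟪g t, x t - a⟫ - 2 * f t) := by
        unfold W; field_simp; ring
      rw [e]
      exact mul_nonpos_of_nonneg_of_nonpos ht0.le (by linarith)
  obtain ⟨l2, hl2⟩ := conv_of_anti (φ := Λ) (T := max T T1) (c := -1 - 2 * C)
    (fun t ht s hs => hLa t (le_trans (le_max_left _ _) ht) s hs) (fun t ht => by
      have h1 := hT1 t (le_trans (le_max_right _ _) ht)
      have h2 := hZC t (le_trans (le_max_left _ _) ht)
      have h3 : 0 ≤ (α - 1) * (‖x t - a‖ ^ 2 / 2) :=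
        mul_nonneg (by linarith) (by positivity)
      simp only [hΛ]
      linarith)
  have := ((hl2.sub (hl.const_mul 2)).sub htk).const_mul (α - 1)⁻¹
  refine ⟨_, this.congr (fun t => ?_)⟩
  have : α - 1 ≠ 0 := by linarith
  simp only [hΛ]
  field_simp
  ring

lemma rpow_anti {t u w : ℝ} (ht : 1 ≤ t) (h : w ≤ u) : t ^ (-u) ≤ t ^ (-w) :=
  Real.rpow_le_rpow_of_exponent_le ht (by linarith)

lemma gron' {L L' : ℝ → ℝ} {T κ C m : ℝ} (hT : 1 ≤ T)
    (h : ∀ t ≥ T, HasDerivAt L (L' t) t) (hm : m < κ) (hC : 0 ≤ C)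
    (h' : ∀ t ≥ T, t * L' t ≤ -κ * L t + C * t ^ (-m)) :
    ∃ C' ≥ 0, ∀ t ≥ T, L t ≤ C' * t ^ (-m) := by
  have h1 := gron (by linarith : (0:ℝ) < T) h hm h'
  have h2 : 0 ≤ C / (κ - m) := div_nonneg hC (by linarith)
  refine ⟨C / (κ - m) + |T ^ κ * (L T - C / (κ - m) * T ^ (-m))|, by positivity, ?_⟩
  intro t ht
  have ht1 : 1 ≤ t := by linarith
  have h3 := h1 t ht
  have h4 := rpow_anti ht1 hm.le
  have h5 : 0 ≤ t ^ (-κ) := by positivity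
  set A := T ^ κ * (L T - C / (κ - m) * T ^ (-m))
  have h6 : A * t ^ (-κ) ≤ |A| * t ^ (-m) := by
    calc A * t ^ (-κ) ≤ |A| * t ^ (-κ) := by gcongr; exact le_abs_self _
      _ ≤ _ := by gcongr
  linarith

/-- Stages 3 and 4: scalar argument. -/
lemma scalar {h h' Q Q' ω D2 : ℝ → ℝ} {T lam b H0 C1 : ℝ} (hT : 1 ≤ T) (hb : 0 < b)
    (hbl : b ≤ lam) (hH0 : 0 ≤ H0) (hC1 : 0 ≤ C1)
    (dh : ∀ t ≥ T, HasDerivAt h (h' t) t) (dQ : ∀ t ≥ T, HasDerivAt Q (Q' t) t)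
    (h0 : ∀ t ≥ T, 0 ≤ h t) (Q0 : ∀ t ≥ T, 0 ≤ Q t) (ω0 : ∀ t ≥ T, 0 ≤ ω t)
    (hlim : Tendsto h atTop (𝓝 0))
    (hE : ∀ t ≥ T, ω t + lam * (t * h' t) ≤ H0 * t ^ (-(2 * lam)))
    (hQ : ∀ t ≥ T, t * Q' t ≤ -(2 * lam) * Q t + 2 * ω t)
    (hh : ∀ t ≥ T, h t ≤ C1 * (D2 t + Q t ^ 2 + t ^ (-(2 * lam))))
    (hD : ∀ δ > 0, ∃ C ≥ 0, ∀ t ≥ T, D2 t ≤ δ * ω t + C * t ^ (-(2 * b))) :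
    ∃ C ≥ 0, ∃ T' ≥ T, ∀ t ≥ T', h t ≤ C * t ^ (-(2 * b)) := by
  have hl : 0 < lam := by linarith
  set L : ℝ → ℝ := fun t => lam * h t + Q t / 4 with hL
  set L' : ℝ → ℝ := fun t => lam * h' t + Q' t / 4 with hL'
  have dL : ∀ t ≥ T, HasDerivAt L (L' t) t := fun t ht =>
    ((dh t ht).const_mul lam).add ((dQ t ht).div_const 4)
  have hLd : ∀ t ≥ T, t * L' t ≤ H0 * t ^ (-(2 * lam)) - ω t / 2 - lam * Q t / 2 := by
    intro t ht
    have h1 := hE t ht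
    have h2 := hQ t ht
    have e : t * L' t = lam * (t * h' t) + t * Q' t / 4 := by simp only [hL']; ring
    rw [e]; linarith
  have hpow : Tendsto (fun t : ℝ => t ^ (-(2 * lam))) atTop (𝓝 0) :=
    tendsto_rpow_neg_atTop (by positivity)
  -- Q becomes small
  have hsmall : ∀ ε > 0, ∃ T' ≥ T, ∀ t ≥ T', Q t ≤ ε := by
    intro ε hε
    have t1 : Tendsto (fun t => H0 * t ^ (-(2 * lam)) + 2 * lam ^ 2 * h t) atTop (𝓝 0) := by
      simpa using (hpow.const_mul H0).add (hlim.const_mul (2 * lam ^ 2))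
    obtain ⟨T1, hT1⟩ := eventually_atTop.1 (t1.eventually_le_const
      (show (0:ℝ) < 2 * lam * (ε / 8) by positivity))
    set T2 := max T T1
    have hT2 : 1 ≤ T2 := le_trans hT (le_max_left _ _)
    have g1 := gron (L := L) (L' := L') (T := T2) (κ := 2 * lam) (C := 2 * lam * (ε / 8)) (m := 0)
      (by linarith) (fun t ht => dL t (le_trans (le_max_left _ _) ht)) (by positivity) (by
        intro t ht
        have h1 := hLd t (le_trans (le_max_left _ _) ht)
        have h2 := hT1 t (le_trans (le_max_right _ _) ht)
        have h3 := ω0 t (le_trans (le_max_left _ _) ht)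
        have e : L t = lam * h t + Q t / 4 := rfl
        rw [neg_zero, Real.rpow_zero, e]
        nlinarith)
    simp only [neg_zero, Real.rpow_zero, sub_zero, mul_one] at g1
    have e : 2 * lam * (ε / 8) / (2 * lam) = ε / 8 := by field_simp
    rw [e] at g1
    have t2 : Tendsto (fun t : ℝ => T2 ^ (2 * lam) * (L T2 - ε / 8) * t ^ (-(2 * lam))) atTop (𝓝 0) := by
      simpa using hpow.const_mul (T2 ^ (2 * lam) * (L T2 - ε / 8))
    obtain ⟨T3, hT3⟩ := eventually_atTop.1 (t2.eventually_le_const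
      (show (0:ℝ) < ε / 8 by positivity))
    refine ⟨max T2 T3, le_trans (le_max_left _ _) (le_max_left _ _), ?_⟩
    intro t ht
    have h1 := g1 t (le_trans (le_max_left _ _) ht)
    have h2 := hT3 t (le_trans (le_max_right _ _) ht)
    have h3 := h0 t (le_trans (le_trans (le_max_left _ _) (le_max_left _ _)) ht)
    have e : L t = lam * h t + Q t / 4 := rfl
    have : 0 ≤ lam * h t := by positivity
    rw [e] at h1
    linarith
  set A : ℝ := (3 * b / 2) * lam * C1 with hA
  have hA0 : 0 ≤ A := by positivity
  obtain ⟨T1, hT1, hQ1⟩ := hsmall (lam / (8 * (A + 1))) (by positivity)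
  obtain ⟨Cd, hCd, hD1⟩ := hD (1 / (2 * (A + 1))) (by positivity)
  have hT1' : 1 ≤ T1 := by linarith
  obtain ⟨C2, hC2, hL2⟩ := gron' (L := L) (L' := L') (T := T1) (κ := 3 * b / 2)
    (C := H0 + A * Cd + A) (m := b) hT1' (fun t ht => dL t (le_trans hT1 ht)) (by linarith)
    (by positivity) (by
      intro t ht
      have htT : t ≥ T := le_trans hT1 ht
      have ht1 : 1 ≤ t := by linarith
      have a1 := hLd t htT
      have a2 := hQ1 t ht
      have a3 := hD1 t htT
      have a4 := hh t htT
      have a5 := Q0 t htT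
      have a6 := ω0 t htT
      have p1 : t ^ (-(2 * lam)) ≤ t ^ (-b) := rpow_anti ht1 (by linarith)
      have p2 : t ^ (-(2 * b)) ≤ t ^ (-b) := rpow_anti ht1 (by linarith)
      have e : L t = lam * h t + Q t / 4 := rfl
      have b1 : (3 * b / 2) * lam * h t ≤ A * (D2 t + Q t ^ 2 + t ^ (-(2 * lam))) := by
        have := mul_le_mul_of_nonneg_left a4 (show 0 ≤ (3 * b / 2) * lam by positivity)
        rw [hA]; linarith
      have b2 : A * D2 t ≤ ω t / 2 + A * Cd * t ^ (-b) := by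
        have c1 := mul_le_mul_of_nonneg_left a3 hA0
        have c2 : A * (1 / (2 * (A + 1))) ≤ 1 / 2 := by
          rw [mul_one_div, div_le_div_iff₀ (by positivity) (by norm_num)]; linarith
        have c3 := mul_le_mul_of_nonneg_right c2 a6
        have c4 := mul_le_mul_of_nonneg_left p2 (mul_nonneg hA0 hCd)
        linarith
      have b3 : A * Q t ^ 2 ≤ lam / 8 * Q t := by
        have c1 : (A + 1) * Q t ≤ lam / 8 := by
          rw [le_div_iff₀ (by positivity)] at a2; linarith
        have c2 := mul_le_mul_of_nonneg_right c1 a5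
        nlinarith [mul_nonneg a5 a5]
      have b4 : A * t ^ (-(2 * lam)) ≤ A * t ^ (-b) := by gcongr
      have b5 : H0 * t ^ (-(2 * lam)) ≤ H0 * t ^ (-b) := by gcongr
      have b6 : b * Q t ≤ lam * Q t := by gcongr
      rw [e]
      linarith)
  -- hence Q^2 is small
  have hQ2 : ∀ t ≥ T1, Q t ^ 2 ≤ (4 * C2) ^ 2 * t ^ (-(2 * b)) := by
    intro t ht
    have htT : t ≥ T := le_trans hT1 ht
    have ht1 : 1 ≤ t := by linarith
    have a1 := hL2 t ht
    have a2 := h0 t htT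
    have e : L t = lam * h t + Q t / 4 := rfl
    have a3 : 0 ≤ lam * h t := by positivity
    have a4 : Q t ≤ 4 * C2 * t ^ (-b) := by rw [e] at a1; linarith
    calc Q t ^ 2 ≤ (4 * C2 * t ^ (-b)) ^ 2 := by
          gcongr
          exact Q0 t htT
      _ = _ := by
          rw [mul_pow, ← Real.rpow_natCast (t ^ (-b)) 2, ← Real.rpow_mul (by linarith)]
          congr 2; push_cast; ring
  -- final ODE
  obtain ⟨Ce, hCe, hDe⟩ := hD (1 / (3 * b * lam * (C1 + 1))) (by positivity)
  obtain ⟨C, hC, hfin⟩ := gron' (L := h) (L' := h') (T := T1) (κ := 3 * b) (m := 2 * b)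
    (C := (H0 + 3 * b * lam * C1 * (Ce + (4 * C2) ^ 2 + 1)) / lam)
    hT1' (fun t ht => dh t (le_trans hT1 ht)) (by linarith) (by positivity) (by
      intro t ht
      have htT : t ≥ T := le_trans hT1 ht
      have ht1 : 1 ≤ t := by linarith
      have a1 := hE t htT
      have a2 := hQ2 t ht
      have a3 := hDe t htT
      have a4 := hh t htT
      have a6 := ω0 t htT
      have p1 : t ^ (-(2 * lam)) ≤ t ^ (-(2 * b)) := rpow_anti ht1 (by linarith)
      have b0 : 0 ≤ 3 * b * lam * C1 := by positivity
      have b1 : 3 * b * lam * h t ≤ 3 * b * lam * C1 * (D2 t + Q t ^ 2 + t ^ (-(2 * lam))) := by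
        have := mul_le_mul_of_nonneg_left a4 (show 0 ≤ 3 * b * lam by positivity)
        linarith
      have b2 : 3 * b * lam * C1 * (D2 t) ≤ ω t + 3 * b * lam * C1 * Ce * t ^ (-(2 * b)) := by
        have c1 := mul_le_mul_of_nonneg_left a3 b0
        have c2 : 3 * b * lam * C1 * (1 / (3 * b * lam * (C1 + 1))) ≤ 1 := by
          rw [mul_one_div, div_le_one (by positivity)]
          nlinarith [mul_pos hb hl]
        have c3 := mul_le_mul_of_nonneg_right c2 a6
        linarith
      have b3 := mul_le_mul_of_nonneg_left a2 b0
      have b4 := mul_le_mul_of_nonneg_left p1 b0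
      have b5 : H0 * t ^ (-(2 * lam)) ≤ H0 * t ^ (-(2 * b)) := by gcongr
      have b6 : lam * (t * h' t) ≤ lam * (-(3 * b) * h t
          + (H0 + 3 * b * lam * C1 * (Ce + (4 * C2) ^ 2 + 1)) / lam * t ^ (-(2 * b))) := by
        have e : lam * (-(3 * b) * h t
          + (H0 + 3 * b * lam * C1 * (Ce + (4 * C2) ^ 2 + 1)) / lam * t ^ (-(2 * b)))
          = -(3 * b * lam * h t)
            + (H0 + 3 * b * lam * C1 * (Ce + (4 * C2) ^ 2 + 1)) * t ^ (-(2 * b)) := by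
          field_simp
        rw [e]; linarith
      exact le_of_mul_le_mul_left b6 hl)
  exact ⟨C, hC, T1, hT1, hfin⟩

/-- Stage 2a. -/
lemma Dyn.E_bound {lam γ : ℝ} (h : Dyn α T X x v g f) (hαl : α = 2 * lam + 1)
    (hγ : 2 ≤ lam * (γ - 2)) {z : E} (hH : ∀ t ≥ T, γ * f t ≤ ⟪g t, x t - z⟫) :
    ∃ H0 ≥ 0, ∀ t ≥ T, t ^ 2 * W f v t + lam * (t * ⟪x t - z, v t⟫) ≤ H0 * t ^ (-(2 * lam)) := by
  have hl : 0 < lam := by have := h.hα; linarith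
  have hT := h.hT
  have g1 := gron (L := fun t => t ^ 2 * W f v t + lam * (t * ⟪x t - z, v t⟫))
    (L' := fun t => 2 * t * W f v t + t ^ 2 * (-(α / t) * ‖v t‖ ^ 2)
      + lam * (1 * ⟪x t - z, v t⟫
        + t * (‖v t‖ ^ 2 - α / t * ⟪x t - z, v t⟫ - ⟪g t, x t - z⟫))) (C := 0) (m := 0)
        (κ := 2 * lam) hT ?_ (by positivity) ?_
  · refine ⟨|T ^ (2 * lam) * (T ^ 2 * W f v T + lam * (T * ⟪x T - z, v T⟫))|, abs_nonneg _, ?_⟩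
    intro t ht
    have := g1 t ht
    simp only [zero_div, zero_mul, sub_zero, zero_add] at this
    refine le_trans this ?_
    have ht0 := h.pos ht
    gcongr
    exact le_abs_self _
  · intro t ht
    have hsq : HasDerivAt (fun t : ℝ => t ^ 2) (2 * t) t := by simpa using hasDerivAt_pow 2 t
    exact (hsq.mul (h.dW ht)).add (((hasDerivAt_id t).mul (h.dk' z ht)).const_mul lam)
  · intro t ht
    have ht0 := h.pos ht
    have h1 := hH t ht
    have h2 := h.f0 t ht
    have e : t * (2 * t * W f v t + t ^ 2 * (-(α / t) * ‖v t‖ ^ 2)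
      + lam * (1 * ⟪x t - z, v t⟫
        + t * (‖v t‖ ^ 2 - α / t * ⟪x t - z, v t⟫ - ⟪g t, x t - z⟫)))
        = -(2 * lam) * (t ^ 2 * W f v t + lam * (t * ⟪x t - z, v t⟫))
        + t ^ 2 * ((2 + 2 * lam) * f t - lam * ⟪g t, x t - z⟫) := by
      rw [hαl]; unfold W; field_simp; ring
    rw [e, zero_mul]
    have h3 : lam * (γ * f t) ≤ lam * ⟪g t, x t - z⟫ := by gcongr
    have h4 : 2 * f t ≤ lam * (γ - 2) * f t := by gcongr
    have h5 : t ^ 2 * ((2 + 2 * lam) * f t - lam * ⟪g t, x t - z⟫) ≤ 0 :=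
      mul_nonpos_of_nonneg_of_nonpos (by positivity) (by linarith)
    linarith

/-- Stage 2b. -/
lemma Dyn.Q_exists {lam H0 r : ℝ} (h : Dyn α T X x v g f) (hαl : α = 2 * lam + 1)
    {z e : E} (hH0 : ∀ t ≥ T, t ^ 2 * W f v t + lam * (t * ⟪x t - z, v t⟫) ≤ H0 * t ^ (-(2 * lam)))
    (hRB : RB X (z + e) r) (hlim : Tendsto x atTop (𝓝 z)) :
    ∃ Q Q' : ℝ → ℝ, (∀ t ≥ T, HasDerivAt Q (Q' t) t) ∧ (∀ t ≥ T, 0 ≤ Q t) ∧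
      (∀ t ≥ T, t * Q' t ≤ -(2 * lam) * Q t + 2 * (t ^ 2 * W f v t)) ∧
      (∀ w : E, ‖w‖ ≤ r → (z + e) + w ∈ X → ∀ t ≥ T,
        ⟪x t - z, w⟫ ≤ ‖x t - z‖ ^ 2 - ⟪x t - z, e⟫ + Q t / (2 * lam)
          + H0 / (2 * lam ^ 2) * t ^ (-(2 * lam))) := by
  have hl : 0 < lam := by have := h.hα; linarith
  have hT := h.hT
  have hr := hRB.1
  have hvc : ContinuousOn v (Ici T) := fun t ht => (h.dv t ht).continuousAt.continuousWithinAt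
  obtain ⟨Φ, hΦT, hΦ⟩ := antideriv (T := T) (φ := fun s => s ^ α * ‖v s‖ ^ 2)
    ((continuousOn_id.rpow_const (fun s hs => Or.inl (h.pos hs).ne')).mul (hvc.norm.pow 2))
  set C0 : ℝ := T ^ α * (‖v T‖ * (r + ‖e‖) + |⟪x T - z, v T⟫|) with hC0
  have hC00 : 0 ≤ C0 := by positivity
  have hΦ0 : ∀ t ≥ T, 0 ≤ Φ t := by
    intro t ht
    have := anti (T := T) (φ := fun t => -Φ t) (φ' := fun t => -(t ^ α * ‖v t‖ ^ 2))
      (fun t ht => (hΦ t ht).neg) (fun t ht => by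
        have := h.pos ht
        have : 0 ≤ t ^ α * ‖v t‖ ^ 2 := by positivity
        linarith) T le_rfl t ht
    simp only [hΦT] at this
    linarith
  have dpow : ∀ t ≥ T, HasDerivAt (fun t : ℝ => t ^ α) (α / t * t ^ α) t := by
    intro t ht
    have ht0 := h.pos ht
    refine (Real.hasDerivAt_rpow_const (Or.inl ht0.ne')).congr_deriv ?_
    rw [Real.rpow_sub_one ht0.ne']; ring
  set Q : ℝ → ℝ := fun t => t ^ (-(2 * lam)) * (C0 + Φ t) with hQ
  set Q' : ℝ → ℝ := fun t => -(2 * lam) * t ^ (-(2 * lam) - 1) * (C0 + Φ t)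
    + t ^ (-(2 * lam)) * (t ^ α * ‖v t‖ ^ 2) with hQ'
  have dQ : ∀ t ≥ T, HasDerivAt Q (Q' t) t := by
    intro t ht
    have ht0 := h.pos ht
    exact (Real.hasDerivAt_rpow_const (Or.inl ht0.ne')).mul ((hΦ t ht).const_add C0)
  have hQ0 : ∀ t ≥ T, 0 ≤ Q t := by
    intro t ht
    have ht0 := h.pos ht
    have := hΦ0 t ht
    simp only [hQ]; positivity
  have hQe : ∀ t ≥ T, t * Q' t = -(2 * lam) * Q t + t ^ 2 * ‖v t‖ ^ 2 := by
    intro t ht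
    have ht0 := h.pos ht
    have e1 : t ^ (-(2 * lam) - 1) = t ^ (-(2 * lam)) / t := Real.rpow_sub_one ht0.ne' _
    have e2 : t ^ (-(2 * lam)) * t ^ α = t := by
      rw [← Real.rpow_add ht0, hαl, show -(2 * lam) + (2 * lam + 1) = (1:ℝ) by ring, Real.rpow_one]
    simp only [hQ', hQ]
    rw [← mul_assoc (t ^ (-(2 * lam))), e2, e1]
    field_simp
    try ring
  refine ⟨Q, Q', dQ, hQ0, ?_, ?_⟩
  · intro t ht
    rw [hQe t ht]
    have := h.f0 t ht
    have : 0 ≤ t ^ 2 * f t := by positivity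
    unfold W
    linarith
  intro w hw hwX
  -- first-order inequality
  have hΘ : ∀ t ≥ T, 0 ≤ t ^ α * (⟪v t, w⟫ + ⟪v t, e⟫ - ⟪x t - z, v t⟫) + (C0 + Φ t) := by
    intro t ht
    have := anti (T := T)
      (φ := fun t => -(t ^ α * (⟪v t, w⟫ + ⟪v t, e⟫ - ⟪x t - z, v t⟫) + (C0 + Φ t)))
      (φ' := fun t => -((α / t * t ^ α) * (⟪v t, w⟫ + ⟪v t, e⟫ - ⟪x t - z, v t⟫)
        + t ^ α * (⟪-(α / t) • v t - g t, w⟫ + ⟪-(α / t) • v t - g t, e⟫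
          - (‖v t‖ ^ 2 - α / t * ⟪x t - z, v t⟫ - ⟪g t, x t - z⟫)) + t ^ α * ‖v t‖ ^ 2)) ?_ ?_
      T le_rfl t ht
    · simp only [hΦT] at this
      have a1 := (abs_le.1 (abs_real_inner_le_norm (v T) w)).1
      have a2 := (abs_le.1 (abs_real_inner_le_norm (v T) e)).1
      have a3 := le_abs_self ⟪x T - z, v T⟫
      have a4 : ‖v T‖ * ‖w‖ ≤ ‖v T‖ * r := by gcongr
      have a5 : 0 ≤ T ^ α * (⟪v T, w⟫ + ⟪v T, e⟫ - ⟪x T - z, v T⟫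
        + (‖v T‖ * (r + ‖e‖) + |⟪x T - z, v T⟫|)) := by
        apply mul_nonneg (by positivity)
        linarith
      rw [hC0] at this ⊢
      linarith
    · intro s hs
      have dvi : ∀ u : E, HasDerivAt (fun s => ⟪v s, u⟫) ⟪-(α / s) • v s - g s, u⟫ s := by
        intro u
        have := (h.dv s hs).inner ℝ (hasDerivAt_const s u)
        refine this.congr_deriv ?_
        simp
      exact (((dpow s hs).mul (((dvi w).add (dvi e)).sub (h.dk' z hs))).add
        ((hΦ s hs).const_add C0)).neg
    · intro s hs
      have hs0 := h.pos hs
      have hc := h.cv s hs _ hwX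
      have hf := h.f0 s hs
      have e1 : ⟪g s, x s - (z + e + w)⟫ = ⟪g s, x s - z⟫ - ⟪g s, e⟫ - ⟪g s, w⟫ := by
        simp only [inner_sub_right, inner_add_right]; ring
      have e2 : -((α / s * s ^ α) * (⟪v s, w⟫ + ⟪v s, e⟫ - ⟪x s - z, v s⟫)
        + s ^ α * (⟪-(α / s) • v s - g s, w⟫ + ⟪-(α / s) • v s - g s, e⟫
          - (‖v s‖ ^ 2 - α / s * ⟪x s - z, v s⟫ - ⟪g s, x s - z⟫)) + s ^ α * ‖v s‖ ^ 2)
          = -(s ^ α * (⟪g s, x s - z⟫ - ⟪g s, e⟫ - ⟪g s, w⟫)) := by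
        simp only [inner_sub_left, real_inner_smul_left]
        ring
      rw [e2]
      have : 0 ≤ s ^ α * (⟪g s, x s - z⟫ - ⟪g s, e⟫ - ⟪g s, w⟫) :=
        mul_nonneg (by positivity) (by linarith)
      linarith
  have hΘ2 : ∀ t ≥ T, 0 ≤ t * (⟪v t, w⟫ + ⟪v t, e⟫ - ⟪x t - z, v t⟫) + Q t := by
    intro t ht
    have ht0 := h.pos ht
    have e2 : t ^ (-(2 * lam)) * t ^ α = t := by
      rw [← Real.rpow_add ht0, hαl, show -(2 * lam) + (2 * lam + 1) = (1:ℝ) by ring, Real.rpow_one]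
    have h1 := mul_nonneg (show 0 ≤ t ^ (-(2 * lam)) by positivity) (hΘ t ht)
    rw [mul_add, ← mul_assoc, e2] at h1
    exact h1
  -- the monotone quantity
  set N : ℝ → ℝ := fun t => -(⟪x t - z, w⟫ - 2 * (‖x t - z‖ ^ 2 / 2) + ⟪x t - z, e⟫
    - Q t / (2 * lam) - H0 / (2 * lam ^ 2) * t ^ (-(2 * lam))) with hN
  have hNa : ∀ t ≥ T, ∀ s ≥ t, N s ≤ N t := by
    apply anti (φ' := fun t => -(⟪v t, w⟫ - 2 * ⟪x t - z, v t⟫ + ⟪v t, e⟫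
      - Q' t / (2 * lam) - H0 / (2 * lam ^ 2) * (-(2 * lam) * t ^ (-(2 * lam) - 1))))
    · intro t ht
      have ht0 := h.pos ht
      have dxi : ∀ u : E, HasDerivAt (fun s => ⟪x s - z, u⟫) ⟪v t, u⟫ t := by
        intro u
        have := ((h.dx t ht).sub_const z).inner ℝ (hasDerivAt_const t u)
        refine this.congr_deriv ?_
        simp
      exact (((((dxi w).sub ((h.dk z ht).const_mul 2)).add (dxi e)).sub
        ((dQ t ht).div_const _)).sub
        ((Real.hasDerivAt_rpow_const (Or.inl ht0.ne')).const_mul _)).neg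
    · intro t ht
      have ht0 := h.pos ht
      have a1 := hΘ2 t ht
      have a2 := hQe t ht
      have a3 := hH0 t ht
      have a4 : 0 ≤ t ^ 2 * f t := mul_nonneg (by positivity) (h.f0 t ht)
      have e1 : t ^ (-(2 * lam) - 1) = t ^ (-(2 * lam)) / t := Real.rpow_sub_one ht0.ne' _
      have e3 : Q' t = (-(2 * lam) * Q t + t ^ 2 * ‖v t‖ ^ 2) / t := by
        rw [← a2]; field_simp
      have e2 : -(⟪v t, w⟫ - 2 * ⟪x t - z, v t⟫ + ⟪v t, e⟫
        - Q' t / (2 * lam) - H0 / (2 * lam ^ 2) * (-(2 * lam) * t ^ (-(2 * lam) - 1)))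
        = -((t * lam)⁻¹ * (lam * (t * (⟪v t, w⟫ + ⟪v t, e⟫ - ⟪x t - z, v t⟫) + Q t)
          + (H0 * t ^ (-(2 * lam)) - (t ^ 2 * W f v t + lam * (t * ⟪x t - z, v t⟫)))
          + t ^ 2 * f t)) := by
        rw [e1, e3]; unfold W; field_simp; ring
      rw [e2]
      have : 0 ≤ (t * lam)⁻¹ * (lam * (t * (⟪v t, w⟫ + ⟪v t, e⟫ - ⟪x t - z, v t⟫) + Q t)
          + (H0 * t ^ (-(2 * lam)) - (t ^ 2 * W f v t + lam * (t * ⟪x t - z, v t⟫)))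
          + t ^ 2 * f t) := by
        apply mul_nonneg (by positivity)
        have := mul_nonneg hl.le a1
        linarith
      linarith
  intro t ht
  have hxz : Tendsto (fun s => x s - z) atTop (𝓝 0) := by
    simpa using hlim.sub_const z
  have hpow : Tendsto (fun t : ℝ => t ^ (-(2 * lam))) atTop (𝓝 0) :=
    tendsto_rpow_neg_atTop (by positivity)
  have hlimN : Tendsto (fun s => -(⟪x s - z, w⟫ + ⟪x s - z, e⟫
      - H0 / (2 * lam ^ 2) * s ^ (-(2 * lam)))) atTop (𝓝 0) := by
    have := (((hxz.inner (tendsto_const_nhds (x := w))).add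
      (hxz.inner (𝕜 := ℝ) (tendsto_const_nhds (x := e)))).sub
      (hpow.const_mul (H0 / (2 * lam ^ 2)))).neg
    simpa using this
  have hNt : 0 ≤ N t := by
    refine le_of_tendsto hlimN ?_
    filter_upwards [eventually_ge_atTop t] with s hs
    refine le_trans ?_ (hNa t ht s hs)
    have a1 := hQ0 s (le_trans ht hs)
    have a2 : 0 ≤ Q s / (2 * lam) := by positivity
    have a3 := sq_nonneg ‖x s - z‖
    simp only [hN]
    linarith
  simp only [hN] at hNt
  linarith

/-- Stage 2c: the distance to the limit is controlled. -/
lemma R_bound {r lam H0 t Qt R2 : ℝ} {y z e : E} {P : E → E} (hl : 0 < lam) (hH0 : 0 ≤ H0)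
    (ht : 1 ≤ t)
    (hP : ∀ y, P y ∈ X) (hRB : RB X (z + e) r) (hz : z ∈ X) (hQ : 0 ≤ Qt)
    (he : ∀ p ∈ X, -(r / 2) * ‖p - z‖ ≤ ⟪e, p - z⟫) (hR2 : 0 ≤ R2)
    (hw : ∀ w : E, ‖w‖ ≤ r → (z + e) + w ∈ X →
        ⟪y - z, w⟫ ≤ R2 - ⟪y - z, e⟫ + Qt / (2 * lam)
          + H0 / (2 * lam ^ 2) * t ^ (-(2 * lam))) :
    r / 2 * ‖P y - z‖ ≤ (r + ‖e‖) * ‖y - P y‖ + R2 + Qt / (2 * lam)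
          + H0 / (2 * lam ^ 2) * t ^ (-(2 * lam)) := by
  have hr := hRB.1
  by_cases hPz : P y - z = 0
  · rw [hPz, norm_zero, mul_zero]
    have : 0 < t := by linarith
    positivity
  have hn : 0 < ‖P y - z‖ := norm_pos_iff.2 hPz
  have hwn : ‖(r / ‖P y - z‖) • (P y - z)‖ = r := by
    rw [norm_smul, Real.norm_of_nonneg (by positivity)]; field_simp
  have h1 := hw ((r / ‖P y - z‖) • (P y - z)) hwn.le (hRB.2 _ (hP y) _ hz _ hwn.le)
  set w := (r / ‖P y - z‖) • (P y - z) with hwd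
  have e1 : ⟪y - z, w⟫ = ⟪y - P y, w⟫ + r * ‖P y - z‖ := by
    have : y - z = (y - P y) + (P y - z) := by abel
    rw [this, inner_add_left]
    congr 1
    rw [hwd, real_inner_smul_right, real_inner_self_eq_norm_sq]
    field_simp
  have e2 : ⟪y - z, e⟫ = ⟪y - P y, e⟫ + ⟪e, P y - z⟫ := by
    have : y - z = (y - P y) + (P y - z) := by abel
    rw [this, inner_add_left, real_inner_comm e (P y - z)]
  have h2 := (abs_le.1 (abs_real_inner_le_norm (y - P y) w)).1
  have h3 := (abs_le.1 (abs_real_inner_le_norm (y - P y) e)).1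
  have h4 := he (P y) (hP y)
  rw [hwn] at h2
  rw [e1, e2] at h1
  linarith

/-- Growth condition turned into a quadratic estimate. -/
lemma growth {K γ2 δ : ℝ} (hK : 0 < K) (hγ2 : 2 < γ2) (hδ : 0 < δ) :
    ∃ C ≥ 0, ∀ t D f : ℝ, 1 ≤ t → 0 ≤ D → 0 ≤ f → K * D ^ γ2 ≤ f →
      D ^ 2 ≤ δ * (t ^ 2 * f) + C * t ^ (-(2 * (2 / (γ2 - 2)))) := by
  have hg : 0 < γ2 - 2 := by linarith
  set b : ℝ := 2 / (γ2 - 2) with hb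
  have hb0 : 0 < b := by positivity
  refine ⟨(1 / (K * δ)) ^ b, by positivity, ?_⟩
  intro t D f ht hD hf hKD
  have ht0 : 0 < t := by linarith
  by_cases hc : D ^ 2 ≤ (1 / (K * δ)) ^ b * t ^ (-(2 * b))
  · have : 0 ≤ δ * (t ^ 2 * f) := by positivity
    linarith
  push Not at hc
  have hp : 0 ≤ (1 / (K * δ)) ^ b * t ^ (-(2 * b)) := by positivity
  have hD0 : 0 < D := by
    rcases hD.lt_or_eq with h | h
    · exact h
    · rw [← h, zero_pow two_ne_zero] at hc; linarith
  have h1 : ((1 / (K * δ)) ^ b * t ^ (-(2 * b))) ^ (b⁻¹) ≤ (D ^ 2) ^ (b⁻¹) :=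
    Real.rpow_le_rpow hp hc.le (by positivity)
  have e1 : ((1 / (K * δ)) ^ b * t ^ (-(2 * b))) ^ (b⁻¹) = 1 / (K * δ) * (t ^ 2)⁻¹ := by
    rw [Real.mul_rpow (by positivity) (by positivity), ← Real.rpow_mul (by positivity),
      ← Real.rpow_mul ht0.le, mul_inv_cancel₀ hb0.ne', Real.rpow_one]
    congr 1
    rw [show -(2 * b) * b⁻¹ = -((2 : ℕ) : ℝ) by push_cast; field_simp, Real.rpow_neg ht0.le,
      Real.rpow_natCast]
  have e2 : (D ^ 2) ^ (b⁻¹) = D ^ γ2 / D ^ 2 := by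
    rw [← Real.rpow_natCast D 2, ← Real.rpow_mul hD, ← Real.rpow_sub hD0]
    congr 1
    rw [hb]; push_cast; field_simp
  rw [e1, e2, le_div_iff₀ (by positivity)] at h1
  have h2 : K * (1 / (K * δ) * (t ^ 2)⁻¹ * D ^ 2) ≤ f := le_trans (by gcongr) hKD
  have h3 : (δ * t ^ 2) * (K * (1 / (K * δ) * (t ^ 2)⁻¹ * D ^ 2)) ≤ (δ * t ^ 2) * f := by gcongr
  have e3 : (δ * t ^ 2) * (K * (1 / (K * δ) * (t ^ 2)⁻¹ * D ^ 2)) = D ^ 2 := by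
    field_simp
  rw [e3] at h3
  linarith

/-- Stage 5. -/
lemma stage5 {h h' w : ℝ → ℝ} {T lam b H0 C : ℝ} (hT : 1 ≤ T) (hb : 0 < b)
    (hbl : b ≤ lam) (hH0 : 0 ≤ H0) (hC : 0 ≤ C)
    (dh : ∀ t ≥ T, HasDerivAt h (h' t) t) (h0 : ∀ t ≥ T, 0 ≤ h t) (w0 : ∀ t ≥ T, 0 ≤ w t)
    (wa : ∀ t ≥ T, ∀ s ≥ t, w s ≤ w t)
    (hE : ∀ t ≥ T, t ^ 2 * w t + lam * (t * h' t) ≤ H0 * t ^ (-(2 * lam)))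
    (hh : ∀ t ≥ T, h t ≤ C * t ^ (-(2 * b))) :
    ∃ C' ≥ 0, ∀ t ≥ 2 * T, w t ≤ C' * t ^ (-(2 + 2 * b)) := by
  have hl : 0 < lam := by linarith
  refine ⟨(H0 + 2 * lam * C) * 2 ^ (2 + 2 * b), by positivity, ?_⟩
  intro t ht
  obtain ⟨s, rfl⟩ : ∃ s, t = 2 * s := ⟨t / 2, by ring⟩
  have hs : s ≥ T := by linarith
  have hs0 : 0 < s := by linarith
  obtain ⟨τ, hτ, hτe⟩ := exists_hasDerivAt_eq_slope h h' (show s < 2 * s by linarith)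
    (fun u hu => (dh u (le_trans hs hu.1)).continuousAt.continuousWithinAt)
    (fun u hu => dh u (le_trans hs hu.1.le))
  have hτT : τ ≥ T := le_trans hs hτ.1.le
  have hτ0 : 0 < τ := by linarith
  have a1 : -(h s / s) ≤ h' τ := by
    rw [hτe, show 2 * s - s = s by ring, ← neg_div]
    have := h0 (2 * s) (by linarith)
    gcongr
    linarith
  have a2 := hE τ hτT
  have a3 := hh s hs
  have p1 : τ ^ (-(2 * lam)) ≤ s ^ (-(2 * b)) := by
    calc τ ^ (-(2 * lam)) ≤ τ ^ (-(2 * b)) := rpow_anti (by linarith) (by linarith)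
      _ ≤ s ^ (-(2 * b)) := Real.rpow_le_rpow_of_nonpos hs0 hτ.1.le (by linarith)
  have a4 : H0 * τ ^ (-(2 * lam)) ≤ H0 * s ^ (-(2 * b)) := by gcongr
  have a5 : lam * (τ * -(h s / s)) ≤ lam * (τ * h' τ) := by gcongr
  have a6 : τ * (h s / s) ≤ 2 * (C * s ^ (-(2 * b))) := by
    have b1 : τ * (h s / s) ≤ (2 * s) * (h s / s) := by
      have := h0 s hs
      gcongr
      exact hτ.2.le
    have b2 : (2 * s) * (h s / s) = 2 * h s := by field_simp
    linarith
  have a7 := mul_le_mul_of_nonneg_left a6 hl.le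
  have a8 : s ^ 2 * w (2 * s) ≤ τ ^ 2 * w τ := by
    have b1 := wa τ hτT (2 * s) hτ.2.le
    have b2 := w0 (2 * s) (by linarith)
    have b3 := hτ.1.le
    gcongr
  have a9 : s ^ 2 * w (2 * s) ≤ (H0 + 2 * lam * C) * s ^ (-(2 * b)) := by linarith
  have e1 : (2 * s) ^ (-(2 + 2 * b)) = (2 ^ (2 + 2 * b))⁻¹ * (s ^ (-(2 * b)) / s ^ 2) := by
    rw [Real.mul_rpow (by norm_num) hs0.le, Real.rpow_neg (by norm_num) (2 + 2 * b)]
    congr 1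
    rw [← Real.rpow_natCast s 2, ← Real.rpow_sub hs0]
    congr 1; push_cast; ring
  have p2 : (0:ℝ) < 2 ^ (2 + 2 * b) := by positivity
  rw [e1]
  have e2 : (H0 + 2 * lam * C) * 2 ^ (2 + 2 * b) * ((2 ^ (2 + 2 * b))⁻¹ * (s ^ (-(2 * b)) / s ^ 2))
    = (H0 + 2 * lam * C) * s ^ (-(2 * b)) / s ^ 2 := by
    field_simp
  rw [e2, le_div_iff₀ (by positivity)]
  linarith

/-- Rate of convergence once the trajectory converges. -/
lemma Dyn.rate {lam γ γ2 K r0 : ℝ} {a0 : E} (h : Dyn α T X x v g f) (hαl : α = 2 * lam + 1)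
    (hγ : 2 ≤ lam * (γ - 2)) (hγ2 : γ ≤ γ2) (hγ' : 2 < γ) (hc : Convex ℝ X)
    {P : E → E} (hP : ∀ y, P y ∈ X)
    (hRB0 : RB X a0 r0) {z : E} (hz : z ∈ X) (hlim : Tendsto x atTop (𝓝 z))
    (hH : ∀ t ≥ T, γ * f t ≤ ⟪g t, x t - z⟫) (hK : 0 < K)
    (hH2 : ∀ t ≥ T, K * ‖x t - P (x t)‖ ^ γ2 ≤ f t) :
    ∃ C ≥ 0, ∃ T' ≥ T, ∀ t ≥ T', f t ≤ C * t ^ (-(2 * γ2 / (γ2 - 2))) := by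
  wlog hT1 : 1 ≤ T generalizing T
  · have hm : T ≤ max T 1 := le_max_left _ _
    obtain ⟨C, hC, T', hT', hf⟩ := this (h.mono hm) (fun t ht => hH t (le_trans hm ht))
      (fun t ht => hH2 t (le_trans hm ht)) (le_max_right _ _)
    exact ⟨C, hC, T', le_trans hm hT', hf⟩
  have hl : 0 < lam := by have := h.hα; linarith
  have hg2 : 0 < γ2 - 2 := by linarith
  obtain ⟨H0, hH0, hE⟩ := h.E_bound hαl hγ hH
  obtain ⟨e, r, hRB, he⟩ := exists_good_dir hc hRB0 hz
  have hr := hRB.1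
  obtain ⟨Q, Q', dQ, Q0, hQ, hw⟩ := h.Q_exists hαl hE hRB hlim
  have hxz : Tendsto (fun s => ‖x s - z‖) atTop (𝓝 0) := by
    simpa using (hlim.sub_const z).norm
  obtain ⟨T1, hT1'⟩ := eventually_atTop.1 (hxz.eventually_le_const (show (0:ℝ) < r / 4 by linarith))
  set T2 := max T T1 with hT2
  have hTT2 : T ≤ T2 := le_max_left _ _
  set b : ℝ := 2 / (γ2 - 2) with hb
  have hb0 : 0 < b := by positivity
  have hbl : b ≤ lam := by
    rw [hb, div_le_iff₀ hg2]; nlinarith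
  set A : ℝ := (3 * r / 2 + ‖e‖) + 1 / (2 * lam) + H0 / (2 * lam ^ 2) with hA
  have hA0 : 0 ≤ A := by positivity
  have hR : ∀ t ≥ T2, r / 4 * ‖x t - z‖ ≤ A * (‖x t - P (x t)‖ + Q t + t ^ (-(2 * lam))) := by
    intro t ht
    have htT : t ≥ T := le_trans hTT2 ht
    have ht1 : 1 ≤ t := le_trans hT1 htT
    have ht0 : 0 < t := by linarith
    have a1 := R_bound (y := x t) (R2 := ‖x t - z‖ ^ 2) hl hH0 ht1 hP hRB hz (Q0 t htT) he
      (by positivity) (fun w hw1 hw2 => hw w hw1 hw2 t htT)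
    have a2 := hT1' t (le_trans (le_max_right _ _) ht)
    have a3 : ‖x t - z‖ ≤ ‖x t - P (x t)‖ + ‖P (x t) - z‖ := by
      simpa using norm_add_le (x t - P (x t)) (P (x t) - z)
    have a4 : ‖x t - z‖ ^ 2 ≤ r / 4 * ‖x t - z‖ := by
      rw [sq]; gcongr
    have a5 : r / 2 * ‖x t - z‖ ≤ r / 2 * (‖x t - P (x t)‖ + ‖P (x t) - z‖) := by gcongr
    have q1 := Q0 t htT
    have q2 : 0 ≤ t ^ (-(2 * lam)) := by positivity
    have q3 := norm_nonneg (x t - P (x t))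
    have c1 : 0 ≤ 3 * r / 2 + ‖e‖ := by positivity
    have c2 : 0 ≤ 1 / (2 * lam) := by positivity
    have c3 : 0 ≤ H0 / (2 * lam ^ 2) := by positivity
    have e1 : Q t / (2 * lam) = 1 / (2 * lam) * Q t := by ring
    rw [e1] at a1
    have m1 := mul_nonneg c1 q1
    have m2 := mul_nonneg c1 q2
    have m3 := mul_nonneg c2 q2
    have m4 := mul_nonneg c2 q3
    have m5 := mul_nonneg c3 q1
    have m6 := mul_nonneg c3 q3
    rw [hA]
    linarith
  obtain ⟨C, hC, T3, hT3, hh⟩ := scalar (h := fun t => ‖x t - z‖ ^ 2 / 2)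
    (h' := fun t => ⟪x t - z, v t⟫) (Q := Q) (Q' := Q') (ω := fun t => t ^ 2 * W f v t)
    (D2 := fun t => ‖x t - P (x t)‖ ^ 2) (T := T2) (lam := lam) (b := b) (H0 := H0)
    (C1 := 3 / 2 * (4 * A / r) ^ 2) (le_trans hT1 hTT2) hb0 hbl hH0 (by positivity)
    (fun t ht => h.dk z (le_trans hTT2 ht)) (fun t ht => dQ t (le_trans hTT2 ht))
    (fun t ht => by positivity) (fun t ht => Q0 t (le_trans hTT2 ht))
    (fun t ht => mul_nonneg (by positivity) (h.W0 (le_trans hTT2 ht)))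
    (by simpa using (hxz.pow 2).div_const 2)
    (fun t ht => hE t (le_trans hTT2 ht)) (fun t ht => hQ t (le_trans hTT2 ht))
    (by
      intro t ht
      have htT : t ≥ T := le_trans hTT2 ht
      have ht1 : 1 ≤ t := le_trans hT1 htT
      have ht0 : 0 < t := by linarith
      have a1 := hR t ht
      have q1 := Q0 t htT
      have q2 : 0 ≤ t ^ (-(2 * lam)) := by positivity
      have q3 := norm_nonneg (x t - P (x t))
      have q4 : t ^ (-(2 * lam)) ≤ 1 := Real.rpow_le_one_of_one_le_of_nonpos ht1 (by linarith)
      set D := ‖x t - P (x t)‖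
      set p := t ^ (-(2 * lam))
      have a2 : ‖x t - z‖ ≤ 4 * A / r * (D + Q t + p) := by
        have : ‖x t - z‖ = 4 / r * (r / 4 * ‖x t - z‖) := by field_simp
        rw [this]
        calc 4 / r * (r / 4 * ‖x t - z‖) ≤ 4 / r * (A * (D + Q t + p)) := by gcongr
          _ = _ := by ring
      have a3 : ‖x t - z‖ ^ 2 ≤ (4 * A / r) ^ 2 * (D + Q t + p) ^ 2 := by
        rw [← mul_pow]; gcongr
      have a4 : (D + Q t + p) ^ 2 ≤ 3 * (D ^ 2 + Q t ^ 2 + p) := by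
        nlinarith [sq_nonneg (D - Q t), sq_nonneg (D - p), sq_nonneg (Q t - p)]
      have a5 := mul_le_mul_of_nonneg_left a4 (sq_nonneg (4 * A / r))
      linarith)
    (by
      intro δ hδ
      obtain ⟨C, hC, hg⟩ := growth hK (show 2 < γ2 by linarith) hδ
      refine ⟨C, hC, fun t ht => ?_⟩
      have htT : t ≥ T := le_trans hTT2 ht
      have ht1 : 1 ≤ t := le_trans hT1 htT
      have hfW : f t ≤ W f v t := by
        have := sq_nonneg ‖v t‖
        unfold W; linarith
      exact hg t _ _ ht1 (norm_nonneg _) (h.W0 htT) (le_trans (hH2 t htT) hfW))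
  have hT3' : T ≤ T3 := le_trans hTT2 hT3
  obtain ⟨C', hC', hfin⟩ := stage5 (h := fun t => ‖x t - z‖ ^ 2 / 2)
    (h' := fun t => ⟪x t - z, v t⟫) (w := W f v) (T := T3) (le_trans hT1 hT3') hb0 hbl hH0 hC
    (fun t ht => h.dk z (le_trans hT3' ht)) (fun t ht => by positivity)
    (fun t ht => h.W0 (le_trans hT3' ht))
    (fun t ht s hs => h.Wanti t (le_trans hT3' ht) s hs)
    (fun t ht => hE t (le_trans hT3' ht)) hh
  have hT0 := h.hT
  refine ⟨C', hC', 2 * T3, by linarith, fun t ht => ?_⟩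
  have e1 : 2 * γ2 / (γ2 - 2) = 2 + 2 * b := by rw [hb]; field_simp; ring
  rw [e1]
  refine le_trans ?_ (hfin t ht)
  have := sq_nonneg ‖v t‖
  unfold W; linarith

lemma grad_ineq [CompleteSpace E] {F : E → ℝ} (hconv : ConvexOn ℝ Set.univ F)
    (hdiff : Differentiable ℝ F) (y a : E) : F y - F a ≤ ⟪gradient F y, y - a⟫ := by
  have hl : HasDerivAt (fun s : ℝ => y + s • (a - y)) (a - y) 0 := by
    have := ((hasDerivAt_id (0:ℝ)).smul_const (a - y)).const_add y
    simpa using this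
  have hd : HasDerivAt (fun s : ℝ => F (y + s • (a - y))) ⟪gradient F y, a - y⟫ 0 := by
    have h1 : HasGradientAt F (gradient F y) (y + (0:ℝ) • (a - y)) := by
      simpa using (hdiff y).hasGradientAt
    have h2 := h1.hasFDerivAt.comp_hasDerivAt (0:ℝ) hl
    refine HasDerivAt.congr_deriv h2 ?_
    simp
  have hc : ConvexOn ℝ Set.univ (fun s : ℝ => F (y + s • (a - y))) := by
    refine ⟨convex_univ, ?_⟩
    intro s _ t _ u w hu hw huw
    have := hconv.2 (mem_univ (y + s • (a - y))) (mem_univ (y + t • (a - y))) hu hw huw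
    have hw' : w = 1 - u := by linarith
    have e : y + (u * s + w * t) • (a - y)
        = u • (y + s • (a - y)) + w • (y + t • (a - y)) := by
      rw [hw']; module
    rw [← e] at this
    exact this
  have h3 := hc.le_slope_of_hasDerivAt (mem_univ 0) (mem_univ 1) zero_lt_one hd
  rw [slope_def_field] at h3
  simp only [one_smul, zero_smul, add_zero, sub_zero, div_one, add_sub_cancel] at h3
  have h4 : ⟪gradient F y, y - a⟫ = -⟪gradient F y, a - y⟫ := by
    rw [← inner_neg_right, neg_sub]
  linarith

end dyn

end S6

open S6 Filter Topology Set in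
theorem S6.final {E : Type*} [NormedAddCommGroup E] [InnerProductSpace ℝ E]
    [FiniteDimensional ℝ E]
    (F : E → ℝ) (Fstar : ℝ) (Xstar : Set E)
    (hXstar : Xstar = {z | ∀ y, F z ≤ F y})
    (hne : Xstar.Nonempty)
    (hFstar : ∀ z ∈ Xstar, F z = Fstar)
    (hconv : ConvexOn ℝ Set.univ F)
    (hdiff : Differentiable ℝ F)
    (α t₀ γ₁ γ₂ : ℝ) (ht₀ : 0 < t₀) (hγ₁ : 2 < γ₁) (hγ₁₂ : γ₁ ≤ γ₂)
    (hαge : (γ₁ + 2) / (γ₁ - 2) ≤ α)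
    (x x' x'' : ℝ → E)
    (hx : ∀ t ∈ Set.Ici t₀, HasDerivAt x (x' t) t)
    (hx'd : ∀ t ∈ Set.Ici t₀, HasDerivAt x' (x'' t) t)
    (hode : ∀ t ∈ Set.Ici t₀, x'' t + (α / t) • x' t + gradient F (x t) = 0)
    (hcoer : Filter.Tendsto F (Filter.comap norm Filter.atTop) Filter.atTop)
    (hH1 : ∀ z ∈ Xstar, ∃ η > 0, ∀ y : E,
      ‖y - z‖ < η → F y - Fstar ≤ (1 / γ₁) * ⟪gradient F y, y - z⟫)
    (hH2 : ∀ z ∈ Xstar, ∃ K > 0, ∃ ε > 0, ∀ y : E,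
      ‖y - z‖ < ε → K * Metric.infDist y Xstar ^ (γ₂ : ℝ) ≤ F y - Fstar) :
    ∃ C > 0, ∃ t₁ ≥ t₀, ∀ t ≥ t₁,
      F (x t) - Fstar ≤ C * t ^ (-(2 * γ₂ / (γ₂ - 2))) := by
  have hFc : Continuous F := hdiff.continuous
  have hFlow : ∀ y, Fstar ≤ F y := by
    obtain ⟨z, hz⟩ := hne
    intro y
    rw [← hFstar z hz]
    rw [hXstar] at hz
    exact hz y
  have hmem : ∀ y, F y ≤ Fstar → y ∈ Xstar := by
    intro y hy
    rw [hXstar]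
    intro u
    exact le_trans hy (hFlow u)
  have hXle : Xstar = {y | F y ≤ Fstar} := by
    ext y
    exact ⟨fun hy => (hFstar y hy).le, hmem y⟩
  -- sublevel sets are compact
  have hsub : ∀ c, IsCompact {y | F y ≤ c} := by
    intro c
    have h1 : IsClosed {y | F y ≤ c} := isClosed_le hFc continuous_const
    have h2 := hcoer.eventually_gt_atTop c
    rw [eventually_comap] at h2
    obtain ⟨B, hB⟩ := eventually_atTop.1 h2
    refine Metric.isCompact_of_isClosed_isBounded h1 ?_
    refine (Metric.isBounded_closedBall (x := (0:E)) (r := B)).subset ?_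
    intro y hy
    rw [mem_closedBall_zero_iff]
    by_contra! hc
    have := hB ‖y‖ hc.le y rfl
    simp only [mem_ofPred_eq] at hy
    linarith
  have hXc : IsCompact Xstar := by rw [hXle]; exact hsub _
  have hXconv : Convex ℝ Xstar := by
    rw [hXle]
    have := hconv.convex_le Fstar
    simpa using this
  obtain ⟨P, hP, hP'⟩ := exists_proj hXconv hne hXc
  obtain ⟨a0, r0, hRB0⟩ := exists_RB hXconv hne
  have hr0 := hRB0.1
  have hg1 : 0 < γ₁ - 2 := by linarith
  set lam : ℝ := (α - 1) / 2 with hlam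
  have hαl : α = 2 * lam + 1 := by rw [hlam]; ring
  have hγ : 2 ≤ lam * (γ₁ - 2) := by
    rw [div_le_iff₀ hg1] at hαge
    rw [hlam]; linarith
  have hα1 : 1 < α := by
    refine lt_of_lt_of_le ?_ hαge
    rw [lt_div_iff₀ hg1]; linarith
  set g : ℝ → E := fun t => gradient F (x t) with hg
  set f : ℝ → ℝ := fun t => F (x t) - Fstar with hf
  have hdyn : Dyn α t₀ Xstar x x' g f := by
    refine ⟨ht₀, hα1, fun t ht => hx t ht, ?_, ?_, ?_, ?_⟩
    · intro t ht
      refine (hx'd t ht).congr_deriv ?_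
      have h1 := hode t ht
      rw [neg_smul]
      have h2 : x'' t = -((α / t) • x' t) - g t
          + (x'' t + (α / t) • x' t + gradient F (x t)) := by
        simp only [hg]; abel
      rw [h2, h1, add_zero]
    · intro t ht
      have h2 := (hdiff (x t)).hasGradientAt.hasFDerivAt.comp_hasDerivAt t (hx t ht)
      have h3 := h2.sub_const Fstar
      refine HasDerivAt.congr_deriv (f := f) h3 ?_
      simp [hg]
    · intro t _
      have := hFlow (x t)
      simp only [hf]; linarith
    · intro t _ a ha
      have := grad_ineq hconv hdiff (x t) a
      rw [hFstar a ha] at this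
      exact this
  -- boundedness
  have hWf : ∀ t, f t ≤ W f x' t := by
    intro t
    have := sq_nonneg ‖x' t‖
    unfold W; linarith
  have hcomp := hsub (W f x' t₀ + Fstar)
  have hxin : ∀ t ≥ t₀, x t ∈ {y | F y ≤ W f x' t₀ + Fstar} := by
    intro t ht
    have h1 := hdyn.Wanti t₀ le_rfl t ht
    have h2 := hWf t
    simp only [hf, mem_ofPred_eq] at h2 ⊢
    linarith
  have hbdd : ∀ a, ∃ M, ∀ t ≥ t₀, ‖x t - a‖ ≤ M := by
    intro a
    obtain ⟨B, hB⟩ := hcomp.isBounded.exists_norm_le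
    refine ⟨B + ‖a‖, fun t ht => ?_⟩
    have := hB _ (hxin t ht)
    have := norm_sub_le (x t) a
    linarith
  have ha0 : a0 ∈ Xstar := hRB0.mem hne
  obtain ⟨M0, hM0⟩ := hbdd a0
  have hfsmall : ∀ ε > 0, ∃ T' ≥ t₀, ∀ t ≥ T', f t ≤ ε := by
    intro ε hε
    obtain ⟨T', h1, h2⟩ := hdyn.W_small ha0 hM0 hε
    exact ⟨T', h1, fun t ht => le_trans (hWf t) (h2 t ht)⟩
  choose! η hη0 hη using hH1
  -- neighbourhood of the solution set
  have hnear : ∃ T' ≥ t₀, ∀ t ≥ T', ∃ z ∈ Xstar, ‖x t - z‖ ≤ r0 / 2 ∧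
      γ₁ * f t ≤ ⟪g t, x t - z⟫ := by
    set U : Set E := ⋃ z ∈ Xstar, Metric.ball z (min (η z) (r0 / 2)) with hU
    have hUo : IsOpen U := isOpen_biUnion (fun z _ => Metric.isOpen_ball)
    have hS : IsCompact ({y | F y ≤ W f x' t₀ + Fstar} \ U) := hcomp.diff hUo
    have hgoal : ∀ t, x t ∈ U → ∃ z ∈ Xstar, ‖x t - z‖ ≤ r0 / 2 ∧
      γ₁ * f t ≤ ⟪g t, x t - z⟫ := by
      intro t ht
      simp only [hU, mem_iUnion, Metric.mem_ball, dist_eq_norm] at ht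
      obtain ⟨z, hz, hzt⟩ := ht
      refine ⟨z, hz, (lt_of_lt_of_le hzt (min_le_right _ _)).le, ?_⟩
      have := hη z hz (x t) (lt_of_lt_of_le hzt (min_le_left _ _))
      rw [one_div, inv_mul_eq_div, le_div_iff₀ (by linarith)] at this
      simp only [hf, hg]; linarith
    rcases ({y | F y ≤ W f x' t₀ + Fstar} \ U).eq_empty_or_nonempty with he | hne'
    · refine ⟨t₀, le_rfl, fun t ht => hgoal t ?_⟩
      by_contra hc
      have : x t ∈ ({y | F y ≤ W f x' t₀ + Fstar} \ U) := ⟨hxin t ht, hc⟩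
      rw [he] at this
      exact this
    · obtain ⟨y0, hy0, hmin⟩ := hS.exists_isMinOn hne' hFc.continuousOn
      have hpos : 0 < F y0 - Fstar := by
        by_contra! hc
        have hyX := hmem y0 (by linarith)
        apply hy0.2
        simp only [hU, mem_iUnion]
        exact ⟨y0, hyX, Metric.mem_ball_self (lt_min (hη0 y0 hyX) (by linarith))⟩
      obtain ⟨T', hT', hs⟩ := hfsmall ((F y0 - Fstar) / 2) (by linarith)
      refine ⟨T', hT', fun t ht => hgoal t ?_⟩
      by_contra hc
      have h1 : F y0 ≤ F (x t) := hmin (show x t ∈ _ from ⟨hxin t (le_trans hT' ht), hc⟩)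
      have h2 := hs t ht
      simp only [hf] at h2
      linarith
  obtain ⟨T1, hT1, hnear⟩ := hnear
  have hd1 := hdyn.mono hT1
  have hWc := hd1.Wcont
  obtain ⟨Z, -, hZ⟩ := antideriv (T := T1) (φ := fun s => s * W f x' s) (continuousOn_id.mul hWc)
  obtain ⟨CZ, hCZ⟩ := hd1.Z_bdd hαl hγ hP hP' hRB0 (fun t ht => hM0 t (le_trans hT1 ht)) hnear hZ
  -- convergence of the trajectory
  have hlim : ∃ z ∈ Xstar, Tendsto x atTop (𝓝 z) := by
    have hseq : ∀ k : ℕ, x (t₀ + k) ∈ {y | F y ≤ W f x' t₀ + Fstar} := fun k =>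
      hxin _ (by have : (0:ℝ) ≤ k := Nat.cast_nonneg k
                 linarith)
    obtain ⟨z, -, φ, hφ, hzlim⟩ := hcomp.tendsto_subseq hseq
    have htk : Tendsto (fun k : ℕ => t₀ + (φ k : ℝ)) atTop atTop :=
      tendsto_atTop_add_const_left _ _ (tendsto_natCast_atTop_atTop.comp hφ.tendsto_atTop)
    have hzX : z ∈ Xstar := by
      apply hmem
      have h1 : Tendsto (fun k => F (x (t₀ + (φ k : ℝ)))) atTop (𝓝 (F z)) :=
        (hFc.tendsto z).comp hzlim
      apply le_of_forall_pos_le_add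
      intro ε hε
      obtain ⟨T', -, hs⟩ := hfsmall ε hε
      refine le_of_tendsto h1 ?_
      filter_upwards [htk.eventually_ge_atTop T'] with k hk
      have := hs _ hk
      simp only [hf] at this
      linarith
    refine ⟨z, hzX, ?_⟩
    obtain ⟨Mz, hMz⟩ := hbdd z
    obtain ⟨l, hl⟩ := hd1.dist_conv hZ hCZ hzX (fun t ht => hMz t (le_trans hT1 ht))
    have h2 := hl.comp htk
    have h3 : Tendsto (fun k => ‖x (t₀ + (φ k : ℝ)) - z‖ ^ 2 / 2) atTop (𝓝 0) := by
      have := ((hzlim.sub_const z).norm.pow 2).div_const 2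
      simpa using this
    have hl0 : l = 0 := tendsto_nhds_unique h2 h3
    rw [hl0] at hl
    have h4 := (hl.const_mul 2).sqrt
    rw [mul_zero, Real.sqrt_zero] at h4
    rw [tendsto_iff_norm_sub_tendsto_zero]
    refine h4.congr (fun t => ?_)
    rw [mul_div_cancel₀ _ (two_ne_zero), Real.sqrt_sq (norm_nonneg _)]
  obtain ⟨z, hzX, hlim⟩ := hlim
  obtain ⟨K, hK, ε, hε, hKε⟩ := hH2 z hzX
  have hxz : Tendsto (fun s => ‖x s - z‖) atTop (𝓝 0) := by
    simpa using (hlim.sub_const z).norm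
  obtain ⟨T2, hT2⟩ := eventually_atTop.1
    (hxz.eventually_lt_const (show (0:ℝ) < min (η z) ε from lt_min (hη0 z hzX) hε))
  have hd2 := hdyn.mono (le_max_left t₀ T2)
  obtain ⟨C, hC, T3, hT3, hfin⟩ := hd2.rate hαl hγ hγ₁₂ hγ₁ hXconv hP hRB0 hzX hlim
    (by
      intro t ht
      have h1 := hT2 t (le_trans (le_max_right _ _) ht)
      have := hη z hzX (x t) (lt_of_lt_of_le h1 (min_le_left _ _))
      rw [one_div, inv_mul_eq_div, le_div_iff₀ (by linarith)] at this
      simp only [hf, hg]; linarith) hK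
    (by
      intro t ht
      have h1 := hT2 t (le_trans (le_max_right _ _) ht)
      have := hKε (x t) (lt_of_lt_of_le h1 (min_le_right _ _))
      rw [proj_infDist hne hP hP'] at this
      exact this)
  have hT3' : t₀ ≤ T3 := le_trans (le_max_left _ _) hT3
  refine ⟨C + 1, by linarith, T3, hT3', fun t ht => ?_⟩
  refine le_trans (hfin t ht) ?_
  have : 0 < t := by linarith
  gcongr
  linarith

theorem stmt_6
    {n : ℕ} (hn : 1 ≤ n)
    (F : EuclideanSpace ℝ (Fin n) → ℝ) (Fstar : ℝ)
    (Xstar : Set (EuclideanSpace ℝ (Fin n)))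
    (hXstar : Xstar = {z | ∀ y, F z ≤ F y})
    (hne : Xstar.Nonempty)
    (hFstar : ∀ z ∈ Xstar, F z = Fstar)
    (hconv : ConvexOn ℝ Set.univ F)
    (hdiff : Differentiable ℝ F)
    (α t₀ γ₁ γ₂ : ℝ) (ht₀ : 0 < t₀) (hγ₁ : 2 < γ₁) (hγ₁₂ : γ₁ ≤ γ₂)
    (hαge : (γ₁ + 2) / (γ₁ - 2) ≤ α)
    (x x' x'' : ℝ → EuclideanSpace ℝ (Fin n))
    (hx : ∀ t ∈ Set.Ici t₀, HasDerivAt x (x' t) t)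
    (hx'd : ∀ t ∈ Set.Ici t₀, HasDerivAt x' (x'' t) t)
    (hx''c : ContinuousOn x'' (Set.Ici t₀))
    (hode : ∀ t ∈ Set.Ici t₀, x'' t + (α / t) • x' t + gradient F (x t) = 0)
    (hcoer : Filter.Tendsto F (Filter.comap norm Filter.atTop) Filter.atTop)
    (hH1 : ∀ z ∈ Xstar, ∃ η > 0, ∀ y : EuclideanSpace ℝ (Fin n),
      ‖y - z‖ < η → F y - Fstar ≤ (1 / γ₁) * ⟪gradient F y, y - z⟫)
    (hH2 : ∀ z ∈ Xstar, ∃ K > 0, ∃ ε > 0, ∀ y : EuclideanSpace ℝ (Fin n),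
      ‖y - z‖ < ε → K * Metric.infDist y Xstar ^ (γ₂ : ℝ) ≤ F y - Fstar)
    :
    ∃ C > 0, ∃ t₁ ≥ t₀, ∀ t ≥ t₁,
      F (x t) - Fstar ≤ C * t ^ (-(2 * γ₂ / (γ₂ - 2))) := by
  exact S6.final F Fstar Xstar hXstar hne hFstar hconv hdiff α t₀ γ₁ γ₂ ht₀ hγ₁ hγ₁₂ hαge x x' x'' hx hx'd hode
    hcoer hH1 hH2
end

section
/- Let θ ∈ [0,1), α > 0, t₀ > 0, γ₁ > 2 and γ₂ ≥ γ₁, and set r = (1 + θ)/2. Let x : [t₀, ∞) → ℝⁿ be a solution of the unperturbed inertial ODE (g ≡ 0) with damping α/t^θ. If F is coercive (F(x) → +∞ as ‖x‖ → ∞) and satisfies hypotheses H1(γ₁) and H2(γ₂), then there exist C > 0 and t₁ ≥ t₀ such that for all t ≥ t₁, F(x(t)) − F* ≤ C · t^{−2rγ₂/(γ₂ − 2)}. -/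
open MeasureTheory
open scoped RealInnerProductSpace

section helpers
open Filter Topology Set

variable {H : Type*} [NormedAddCommGroup H] [InnerProductSpace ℝ H]

lemma aux_proj [ProperSpace H] {X : Set H} (hne : X.Nonempty) (hc : IsClosed X) (hconv : Convex ℝ X) :
    ∃ P : H → H, (∀ y, P y ∈ X) ∧ (∀ y, ‖y - P y‖ = Metric.infDist y X) ∧
      (∀ y w, ‖P y - P w‖ ^ 2 ≤ ⟪P y - P w, y - w⟫) := by
  have h1 := exists_norm_eq_iInf_of_complete_convex hne hc.isComplete hconv
  choose P hP1 hP2 using h1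
  have h3 : ∀ y, ∀ w ∈ X, ⟪y - P y, w - P y⟫ ≤ 0 := fun y =>
    (norm_eq_iInf_iff_real_inner_le_zero hconv (hP1 y)).1 (hP2 y)
  refine ⟨P, hP1, ?_, ?_⟩
  · intro y
    rw [hP2, Metric.infDist_eq_iInf]
    simp [dist_eq_norm]
  · intro y w
    have a := h3 y _ (hP1 w)
    have b := h3 w _ (hP1 y)
    rw [← real_inner_self_eq_norm_sq]
    simp only [inner_sub_left, inner_sub_right] at *
    have := real_inner_comm (P y) (P w)
    have := real_inner_comm (P y) y
    have := real_inner_comm (P y) w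
    have := real_inner_comm (P w) y
    have := real_inner_comm (P w) w
    linarith

lemma aux_nonexp {P : H → H} (hP : ∀ y w, ‖P y - P w‖ ^ 2 ≤ ⟪P y - P w, y - w⟫) (y w : H) :
    ‖P y - P w‖ ≤ ‖y - w‖ := by
  have a := hP y w
  have b := real_inner_le_norm (P y - P w) (y - w)
  by_contra hlt
  push Not at hlt
  have : 0 ≤ ‖y - w‖ := norm_nonneg _
  nlinarith

lemma aux_grad [CompleteSpace H] {F : H → ℝ} (hconv : ConvexOn ℝ univ F) (hd : Differentiable ℝ F) (y z : H) :
    F y - F z ≤ ⟪gradient F y, y - z⟫ := by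
  have h1 : HasFDerivAt F (InnerProductSpace.toDual ℝ H (gradient F y)) y :=
    (hd y).hasGradientAt.hasFDerivAt
  have h2 : HasDerivAt (fun s : ℝ => y + s • (z - y)) (z - y) 0 := by
    simpa using ((hasDerivAt_id (0:ℝ)).smul_const (z - y)).const_add y
  have h3 : HasDerivAt (fun s : ℝ => F (y + s • (z - y))) ⟪gradient F y, z - y⟫ 0 := by
    have h1' : HasFDerivAt F (InnerProductSpace.toDual ℝ H (gradient F y)) (y + (0:ℝ) • (z - y)) := by
      simpa using h1
    exact h1'.comp_hasDerivAt (0:ℝ) h2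
  have h4 : ConvexOn ℝ univ (fun s : ℝ => F (y + s • (z - y))) := by
    have := hconv.comp_affineMap (AffineMap.lineMap (k := ℝ) y z)
    simp only [preimage_univ] at this
    have h6 : (fun s : ℝ => F (y + s • (z - y))) = F ∘ (AffineMap.lineMap (k := ℝ) y z) := by
      funext s
      simp [AffineMap.lineMap_apply, add_comm]
    rw [h6]
    exact this
  have h5 := h4.le_slope_of_hasDerivAt (mem_univ 0) (mem_univ 1) one_pos h3
  simp only [slope_def_field] at h5
  rw [sub_zero, div_one, one_smul, zero_smul, add_zero, add_sub_cancel] at h5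
  rw [← neg_sub z y, inner_neg_right]
  linarith

lemma aux_compact {F : H → ℝ} {X S : Set H} {Fs γ : ℝ} (hγ : 0 < γ) (hS : IsCompact S) (hF : Continuous F)
    (hX : ∀ y, y ∉ X → Fs < F y)
    (hH2 : ∀ z ∈ X, ∃ K > 0, ∃ ε > 0, ∀ y : H,
      ‖y - z‖ < ε → K * Metric.infDist y X ^ (γ : ℝ) ≤ F y - Fs) :
    ∃ K > 0, ∀ y ∈ S, K * Metric.infDist y X ^ (γ : ℝ) ≤ F y - Fs := by
  refine hS.induction_on (p := fun S => ∃ K > 0, ∀ y ∈ S, K * Metric.infDist y X ^ (γ : ℝ) ≤ F y - Fs)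
    ⟨1, one_pos, by simp⟩ ?_ ?_ ?_
  · rintro s t hst ⟨K, hK, h⟩
    exact ⟨K, hK, fun y hy => h y (hst hy)⟩
  · rintro s t ⟨K, hK, h⟩ ⟨L, hL, h'⟩
    refine ⟨min K L, lt_min hK hL, ?_⟩
    have hn : ∀ y : H, 0 ≤ Metric.infDist y X ^ (γ : ℝ) := fun y =>
      Real.rpow_nonneg Metric.infDist_nonneg _
    rintro y (hy | hy)
    · exact (mul_le_mul_of_nonneg_right (min_le_left _ _) (hn y)).trans (h y hy)
    · exact (mul_le_mul_of_nonneg_right (min_le_right _ _) (hn y)).trans (h' y hy)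
  · intro z hz
    by_cases hzX : z ∈ X
    · obtain ⟨K, hK, ε, hε, h⟩ := hH2 z hzX
      refine ⟨Metric.ball z ε, mem_nhdsWithin_of_mem_nhds (Metric.ball_mem_nhds z hε), K, hK, ?_⟩
      intro y hy
      exact h y (by simpa [dist_eq_norm] using hy)
    · have hw : 0 < F z - Fs := sub_pos.2 (hX z hzX)
      set m := (F z - Fs) / 2 with hm
      set D := Metric.infDist z X ^ γ + 1 with hD
      have hD0 : 0 < D := by
        have := Real.rpow_nonneg (Metric.infDist_nonneg (x := z) (s := X)) γ
        linarith
      have c1 : ∀ᶠ y in 𝓝 z, m < F y - Fs :=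
        (hF.sub continuous_const).continuousAt.eventually_const_lt (by simp only [hm, Pi.sub_apply]; linarith)
      have c2 : ∀ᶠ y in 𝓝 z, Metric.infDist y X ^ γ < D :=
        ((Metric.continuous_infDist_pt X).rpow_const (fun _ => Or.inr hγ.le)).continuousAt.eventually_lt_const
          (by simp only [hD]; linarith)
      refine ⟨_, mem_nhdsWithin_of_mem_nhds (c1.and c2), m / D, div_pos (by linarith) hD0, ?_⟩
      rintro y ⟨h1, h2⟩
      have : m / D * Metric.infDist y X ^ γ ≤ m / D * D :=
        mul_le_mul_of_nonneg_left h2.le (div_pos (by linarith) hD0).le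
      rw [div_mul_cancel₀ _ hD0.ne'] at this
      linarith

lemma aux_pow {γ a K A : ℝ} (hγ : 2 < γ) (hK : 0 < K) (hA : 0 < A) :
    ∃ M > 0, ∀ t d e : ℝ, 0 < t → 0 ≤ d → M * t ^ (-(a * γ / (γ - 2))) ≤ e → K * d ^ γ ≤ e →
      A * d ^ 2 ≤ e * t ^ a := by
  have hγ0 : 0 < γ := by linarith
  set β := 1 - 2 / γ with hβ
  have hβ0 : 0 < β := by
    rw [hβ, sub_pos, div_lt_one hγ0]; exact hγ
  have hN : 0 < A * (K ^ (2/γ))⁻¹ := by positivity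
  refine ⟨(A * (K ^ (2/γ))⁻¹) ^ (1/β), by positivity, ?_⟩
  intro t d e ht hd h1 h2
  have hM : 0 < (A * (K ^ (2/γ))⁻¹) ^ (1/β) * t ^ (-(a * γ / (γ - 2))) := by positivity
  have he : 0 < e := hM.trans_le h1
  have h3 : A * (K ^ (2/γ))⁻¹ * t ^ (-a) ≤ e ^ β := by
    have := Real.rpow_le_rpow hM.le h1 hβ0.le
    rw [Real.mul_rpow (by positivity) (by positivity), ← Real.rpow_mul hN.le, ← Real.rpow_mul ht.le,
      one_div_mul_cancel hβ0.ne', Real.rpow_one] at this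
    convert this using 3
    rw [hβ]
    have : γ - 2 ≠ 0 := by linarith
    field_simp
  have h4 : d ^ 2 ≤ e ^ (2/γ) * (K ^ (2/γ))⁻¹ := by
    have h5 : d ^ γ ≤ e / K := by rw [le_div_iff₀ hK]; linarith
    have := Real.rpow_le_rpow (by positivity) h5 (by positivity : 0 ≤ 2/γ)
    rw [← Real.rpow_mul hd, mul_div_cancel₀ _ hγ0.ne', Real.div_rpow he.le hK.le] at this
    rw [← div_eq_mul_inv]
    simpa using this
  have h6 : e = e ^ (2/γ) * e ^ β := by
    rw [← Real.rpow_add he, hβ]; simp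
  have h7 : t ^ (-a) * t ^ a = 1 := by rw [← Real.rpow_add ht]; simp
  calc A * d ^ 2 ≤ A * (e ^ (2/γ) * (K ^ (2/γ))⁻¹) := by gcongr
    _ = e ^ (2/γ) * (A * (K ^ (2/γ))⁻¹ * t ^ (-a)) * t ^ a := by
        linear_combination (-(A * e ^ (2/γ) * (K ^ (2/γ))⁻¹)) * h7
    _ ≤ e ^ (2/γ) * e ^ β * t ^ a := by gcongr
    _ = e * t ^ a := by rw [← h6]

lemma aux_alg {E v d h g q t c p : ℝ} (ht : 0 < t) (hp : 1 ≤ p) (hc : c = p + 1) 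
    (hg : E - v ^ 2 / 2 ≤ g) (hh : |h| ≤ d * v) (hq : 8 * c / t ≤ q) (hE : 2 * c ^ 2 * q * d ^ 2 ≤ E * t) :
    p / t * (E + c / t * h) + (-(q * v ^ 2) + (-(c / t ^ 2) * h + c / t * (v ^ 2 - q * h - g))) ≤ 0 := by
  obtain ⟨i, hi⟩ : ∃ i, i = 1 / t := ⟨_, rfl⟩
  have hi0 : 0 < i := by rw [hi]; positivity
  have hit : i * t = 1 := by rw [hi]; field_simp
  have e1 : p / t = p * i := by rw [hi]; ring
  have e2 : c / t = c * i := by rw [hi]; ring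
  have e3 : c / t ^ 2 = c * i ^ 2 := by rw [hi]; field_simp
  have hq' : 8 * c * i ≤ q := by rw [hi]; convert hq using 1; ring
  have hc0 : 0 < c := by linarith
  have hq0 : 0 < q := lt_of_lt_of_le (by positivity) hq'
  have hE' : 2 * c ^ 2 * i ^ 2 * q * d ^ 2 ≤ E * i := by
    have := mul_le_mul_of_nonneg_right hE (by positivity : 0 ≤ i ^ 2)
    calc _ = 2 * c ^ 2 * q * d ^ 2 * i ^ 2 := by ring
      _ ≤ _ := this
      _ = E * i * (i * t) := by ring
      _ = _ := by rw [hit, mul_one]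
  rw [e1, e2, e3]
  obtain ⟨h1, h2⟩ := abs_le.1 hh
  have k1 : c * i * ((p - 1) * i - q) * h ≤ c * i * (2 * q) * (d * v) := by
    have : ((p - 1) * i - q) * h ≤ (2 * q) * (d * v) := by
      have a1 : |(p - 1) * i - q| ≤ 2 * q := by
        rw [abs_le]; constructor <;> nlinarith
      calc _ ≤ |((p - 1) * i - q) * h| := le_abs_self _
        _ = |((p - 1) * i - q)| * |h| := abs_mul _ _
        _ ≤ _ := by gcongr
    have := mul_le_mul_of_nonneg_left this (by positivity : 0 ≤ c * i)
    linarith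
  have k2 : c * i * (2 * q) * (d * v) ≤ q / 2 * v ^ 2 + 2 * c ^ 2 * i ^ 2 * q * d ^ 2 := by
    have : 0 ≤ q / 2 * (v - 2 * c * i * d) ^ 2 := by positivity
    nlinarith
  have k3 : c * i * (E - v ^ 2 / 2) ≤ c * i * g := by gcongr
  have k4 : 8 * c * i * v ^ 2 ≤ q * v ^ 2 := by gcongr
  have k5 : 0 ≤ c * i * v ^ 2 := by positivity
  subst hc
  nlinarith

lemma aux_equiv {E v d h q t c : ℝ} (ht : 0 < t) (hc : 1 ≤ c) 
    (hEv : v ^ 2 / 2 ≤ E) (hh : |h| ≤ d * v) (hq : 8 * c / t ≤ q) (hE : 2 * c ^ 2 * q * d ^ 2 ≤ E * t) :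
    E / 4 ≤ E + c / t * h ∧ E + c / t * h ≤ 2 * E := by
  have hE0 : 0 ≤ E := le_trans (by positivity) hEv
  have k1 : |c / t * h| ≤ c / t * (d * v) := by
    rw [abs_mul, abs_of_pos (by positivity : 0 < c / t)]; gcongr
  have k2 : c / t * (d * v) ≤ v ^ 2 / 4 + (c / t) ^ 2 * d ^ 2 := by
    nlinarith [sq_nonneg (v / 2 - c / t * d)]
  have k3 : 2 * c ^ 2 * (8 * c / t) * d ^ 2 ≤ E * t := le_trans (by gcongr) hE
  have k4 : (c / t) ^ 2 * d ^ 2 ≤ E / 16 := by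
    have a1 : 2 * c ^ 2 * (8 * 1 / t) * d ^ 2 ≤ E * t := le_trans (by gcongr) k3
    have a2 : (c / t) ^ 2 * d ^ 2 = (2 * c ^ 2 * (8 * 1 / t) * d ^ 2) / (16 * t) := by
      field_simp; ring
    rw [a2, div_le_div_iff₀ (by positivity) (by norm_num)]
    linarith
  have := abs_le.1 k1
  constructor <;> linarith [this.1, this.2]

lemma aux_dini {P : H → H} (hP : ∀ y w, ‖P y - P w‖ ^ 2 ≤ ⟪P y - P w, y - w⟫)
    {x x' : ℝ → H} {t : ℝ} (hx : HasDerivAt x (x' t) t) (hx' : ContinuousAt x' t)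
    {e w : ℝ → ℝ} (hw : ContinuousAt w t) (hw0 : ∀ᶠ s in 𝓝 t, 0 ≤ w s) {D : ℝ}
    (hD : HasDerivAt (fun s => e s + w s * ⟪x s - P (x t), x' s⟫) D t) (hD0 : D ≤ 0) {r : ℝ} (hr : 0 < r) :
    ∀ᶠ s in 𝓝[>] t, slope (fun s => e s + w s * ⟪x s - P (x s), x' s⟫) t s < r := by
  have hle : 𝓝[>] t ≤ 𝓝[≠] t := nhdsWithin_mono t (fun s hs => ne_of_gt hs)
  have hxs : Tendsto (slope x t) (𝓝[>] t) (𝓝 (x' t)) := hx.tendsto_slope.mono_left hle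
  have hDs := hD.tendsto_slope.mono_left hle
  have hw' : Tendsto w (𝓝[>] t) (𝓝 (w t)) := hw.tendsto.mono_left nhdsWithin_le_nhds
  have hx'' : Tendsto x' (𝓝[>] t) (𝓝 (x' t)) := hx'.tendsto.mono_left nhdsWithin_le_nhds
  have hR := hDs.add (hw'.mul (hxs.norm.mul (hx''.sub hxs).norm))
  simp only [sub_self, norm_zero, mul_zero, add_zero] at hR
  filter_upwards [hR.eventually_lt_const (lt_of_le_of_lt hD0 hr), self_mem_nhdsWithin,
    hw0.filter_mono nhdsWithin_le_nhds] with s hs hst hws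
  refine lt_of_le_of_lt ?_ hs
  have hst' : 0 < s - t := sub_pos.2 hst
  have hsl : x s - x t = (s - t) • slope x t s := by rw [sub_smul_slope]; rfl
  have k1 : ‖P (x s) - P (x t)‖ ≤ (s - t) * ‖slope x t s‖ := by
    have := aux_nonexp hP (x s) (x t)
    rwa [hsl, norm_smul, Real.norm_of_nonneg hst'.le] at this
  have k2 : 0 ≤ ⟪P (x s) - P (x t), slope x t s⟫ := by
    have := (sq_nonneg _).trans (hP (x s) (x t))
    rw [hsl, inner_smul_right] at this
    exact nonneg_of_mul_nonneg_right this hst'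
  have k3 : -⟪P (x s) - P (x t), x' s⟫ ≤ (s - t) * (‖slope x t s‖ * ‖x' s - slope x t s‖) := by
    have a1 : ⟪P (x s) - P (x t), x' s⟫ = ⟪P (x s) - P (x t), slope x t s⟫
        + ⟪P (x s) - P (x t), x' s - slope x t s⟫ := by
      rw [← inner_add_right]; congr 1; abel
    have a2 := (abs_le.1 (abs_real_inner_le_norm (P (x s) - P (x t)) (x' s - slope x t s))).1
    have a3 := mul_le_mul_of_nonneg_right k1 (norm_nonneg (x' s - slope x t s))
    linarith
  have k4 : ⟪x s - P (x s), x' s⟫ = ⟪x s - P (x t), x' s⟫ - ⟪P (x s) - P (x t), x' s⟫ := by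
    rw [← inner_sub_left]; congr 1; abel
  rw [slope_def_field, slope_def_field, ← sub_nonneg]
  have k5 := mul_le_mul_of_nonneg_left k3 hws
  rw [k4, ← mul_le_mul_iff_right₀ hst']
  · field_simp
    linarith

lemma aux_barrier {G : ℝ → ℝ} {t₁ M : ℝ} (hM : 0 < M) (hG : ContinuousOn G (Ici t₁)) (hG0 : 0 ≤ G t₁)
    (h : ∀ a b, t₁ ≤ a → a ≤ b → (∀ s ∈ Icc a b, M ≤ G s) → G b ≤ 8 * G a) (t : ℝ) (ht : t₁ ≤ t) :
    G t ≤ 8 * max M (G t₁) := by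
  set S := {s | s ∈ Icc t₁ t ∧ G s ≤ M} with hS
  have hm := le_max_left M (G t₁)
  have hm' := le_max_right M (G t₁)
  by_cases hne : S.Nonempty
  · have hcl : IsClosed S :=
      (hG.mono Icc_subset_Ici_self).preimage_isClosed_of_isClosed isClosed_Icc isClosed_Iic
    have hcp : IsCompact S := isCompact_Icc.of_isClosed_subset hcl (fun s hs => hs.1)
    obtain ⟨a, ⟨haI, haM⟩, hmax⟩ := hcp.exists_isGreatest hne
    have hgt : ∀ s ∈ Ioc a t, M < G s := by
      intro s hs
      by_contra hcon
      push Not at hcon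
      have : s ≤ a := hmax ⟨⟨haI.1.trans hs.1.le, hs.2⟩, hcon⟩
      exact absurd hs.1 (not_lt.2 this)
    rcases haI.2.eq_or_lt with heq | hlt
    · subst heq; linarith
    · have haM' : M ≤ G a := by
        have c1 : Tendsto G (𝓝[>] a) (𝓝 (G a)) :=
          (hG a haI.1).mono_left (nhdsWithin_mono a (fun s hs => haI.1.trans (le_of_lt hs)))
        refine ge_of_tendsto c1 ?_
        filter_upwards [Ioc_mem_nhdsGT hlt] with s hs using (hgt s hs).le
      have := h a t haI.1 haI.2 (fun s hs => by
        rcases hs.1.eq_or_lt with h1 | h1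
        · rw [← h1]; exact haM'
        · exact (hgt s ⟨h1, hs.2⟩).le)
      linarith
  · have := h t₁ t le_rfl ht (fun s hs => by
      by_contra hcon
      push Not at hcon
      exact hne ⟨s, hs, hcon.le⟩)
    linarith

end helpers

theorem stmt_7
    {n : ℕ} (hn : 1 ≤ n)
    (F : EuclideanSpace ℝ (Fin n) → ℝ) (Fstar : ℝ)
    (Xstar : Set (EuclideanSpace ℝ (Fin n)))
    (hXstar : Xstar = {z | ∀ y, F z ≤ F y})
    (hne : Xstar.Nonempty)
    (hFstar : ∀ z ∈ Xstar, F z = Fstar)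
    (hconv : ConvexOn ℝ Set.univ F)
    (hdiff : Differentiable ℝ F)
    (α t₀ θ γ₁ γ₂ r : ℝ) (hα : 0 < α) (ht₀ : 0 < t₀) (hθ : 0 ≤ θ) (hθ1 : θ < 1)
    (hγ₁ : 2 < γ₁) (hγ₁₂ : γ₁ ≤ γ₂) (hr : r = (1 + θ) / 2)
    (x x' x'' : ℝ → EuclideanSpace ℝ (Fin n))
    (hx : ∀ t ∈ Set.Ici t₀, HasDerivAt x (x' t) t)
    (hx'd : ∀ t ∈ Set.Ici t₀, HasDerivAt x' (x'' t) t)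
    (hx''c : ContinuousOn x'' (Set.Ici t₀))
    (hode : ∀ t ∈ Set.Ici t₀, x'' t + (α / t ^ θ) • x' t + gradient F (x t) = 0)
    (hcoer : Filter.Tendsto F (Filter.comap norm Filter.atTop) Filter.atTop)
    (hH1 : ∀ z ∈ Xstar, ∃ η > 0, ∀ y : EuclideanSpace ℝ (Fin n),
      ‖y - z‖ < η → F y - Fstar ≤ (1 / γ₁) * ⟪gradient F y, y - z⟫)
    (hH2 : ∀ z ∈ Xstar, ∃ K > 0, ∃ ε > 0, ∀ y : EuclideanSpace ℝ (Fin n),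
      ‖y - z‖ < ε → K * Metric.infDist y Xstar ^ (γ₂ : ℝ) ≤ F y - Fstar)
    :
    ∃ C > 0, ∃ t₁ ≥ t₀, ∀ t ≥ t₁,
      F (x t) - Fstar ≤ C * t ^ (-(2 * r * γ₂ / (γ₂ - 2))) := by
  have _hn := hn
  have hFc : Continuous F := hdiff.continuous
  have hmin : ∀ z ∈ Xstar, ∀ y, F z ≤ F y := by intro z hz; rw [hXstar] at hz; exact hz
  obtain ⟨z₀, hz₀⟩ := hne
  have hFle : ∀ y, Fstar ≤ F y := fun y => by rw [← hFstar z₀ hz₀]; exact hmin z₀ hz₀ y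
  have hXeq : Xstar = {z | F z ≤ Fstar} := by
    ext z
    constructor
    · intro hz; exact (hFstar z hz).le
    · intro hz; rw [hXstar]; exact fun y => le_trans hz (hFle y)
  have hXcl : IsClosed Xstar := by
    rw [hXeq]; exact isClosed_le hFc continuous_const
  have hXconv : Convex ℝ Xstar := by
    rw [hXeq]
    simpa using hconv.convex_le Fstar
  obtain ⟨P, hPX, hPd, hPm⟩ := aux_proj ⟨z₀, hz₀⟩ hXcl hXconv
  have hPc : Continuous P := by
    refine (LipschitzWith.of_dist_le_mul (K := 1) fun y w => ?_).continuous
    simpa [dist_eq_norm] using aux_nonexp hPm y w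
  -- energy
  set E : ℝ → ℝ := fun s => F (x s) - Fstar + ‖x' s‖ ^ 2 / 2 with hEdef
  have hγ0 : 0 < γ₂ := by linarith
  have hpos : ∀ t, t₀ ≤ t → 0 < t := fun t ht => ht₀.trans_le ht
  have hEd : ∀ t, t₀ ≤ t → HasDerivAt E (-((α / t ^ θ) * ‖x' t‖ ^ 2)) t := by
    intro t ht
    have h1 : HasDerivAt (fun s => F (x s)) ⟪gradient F (x t), x' t⟫ t :=
      (hdiff (x t)).hasGradientAt.hasFDerivAt.comp_hasDerivAt t (hx t ht)
    have h2 := (hx'd t ht).norm_sq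
    have h3 := (h1.sub_const Fstar).add (h2.div_const 2)
    refine h3.congr_deriv ?_
    have h4 : gradient F (x t) = -x'' t - (α / t ^ θ) • x' t := by
      have := hode t ht
      rw [← sub_eq_zero, ← this]; abel
    rw [h4, inner_sub_left, inner_neg_left, inner_smul_left, real_inner_self_eq_norm_sq,
      real_inner_comm (x' t) (x'' t)]
    simp
    ring
  have hEanti : AntitoneOn E (Set.Ici t₀) := by
    refine antitoneOn_of_deriv_nonpos (convex_Ici t₀)
      (fun t ht => (hEd t ht).continuousAt.continuousWithinAt)
      (fun t ht => (hEd t (interior_subset ht)).differentiableAt.differentiableWithinAt) ?_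
    intro t ht
    have ht' := interior_subset ht
    rw [(hEd t ht').deriv]
    have := hpos t ht'
    have : 0 ≤ α / t ^ θ * ‖x' t‖ ^ 2 := by positivity
    linarith
  have hScp : IsCompact {y | F y ≤ Fstar + E t₀} := by
    refine Metric.isCompact_of_isClosed_isBounded (isClosed_le hFc continuous_const) ?_
    have h1 := hcoer.eventually (Filter.eventually_gt_atTop (Fstar + E t₀))
    rw [comap_norm_atTop] at h1
    rw [← Bornology.isCobounded_compl_iff]
    have h2 : {y | F y ≤ Fstar + E t₀}ᶜ = {y | Fstar + E t₀ < F y} := by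
      ext y; simp
    rw [h2]
    exact h1
  obtain ⟨K, hK, hKS⟩ := aux_compact hγ0 hScp hFc (fun y hy => by
    rw [hXeq] at hy; simpa using hy) hH2
  have hKx : ∀ t, t₀ ≤ t → K * ‖x t - P (x t)‖ ^ γ₂ ≤ E t := by
    intro t ht
    have h1 := hEanti (Set.mem_Ici.2 le_rfl) (Set.mem_Ici.2 ht) ht
    have h2 : 0 ≤ ‖x' t‖ ^ 2 / 2 := by positivity
    have h3 : E t = F (x t) - Fstar + ‖x' t‖ ^ 2 / 2 := rfl
    have := hKS (x t) (by simp only [Set.mem_setOf_eq]; linarith)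
    rw [hPd]
    linarith
  set p : ℝ := (1 + θ) * γ₂ / (γ₂ - 2) with hp
  have hp1 : 1 ≤ p := by
    rw [hp, le_div_iff₀ (by linarith)]
    nlinarith
  obtain ⟨c, hc⟩ : ∃ c, c = p + 1 := ⟨_, rfl⟩
  have hc0 : 0 < c := by linarith
  obtain ⟨M, hM, hMp⟩ := aux_pow (a := 1 + θ) (A := 2 * c ^ 2 * α) (by linarith : 2 < γ₂) hK (by positivity)
  -- threshold time
  obtain ⟨t₁, ht₁, hqt⟩ : ∃ t₁ ≥ t₀, ∀ t ≥ t₁, 8 * c / t ≤ α / t ^ θ := by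
    have h1 := (tendsto_rpow_atTop (by linarith : 0 < 1 - θ)).eventually_ge_atTop (8 * c / α)
    obtain ⟨T, hT⟩ := Filter.eventually_atTop.1 h1
    refine ⟨max T t₀, le_max_right _ _, fun t ht => ?_⟩
    have h2 := hT t ((le_max_left _ _).trans ht)
    have ht0 : 0 < t := hpos t ((le_max_right _ _).trans ht)
    rw [Real.rpow_sub ht0, Real.rpow_one, div_le_div_iff₀ hα (by positivity)] at h2
    rw [div_le_div_iff₀ ht0 (by positivity)]
    linarith
  set G : ℝ → ℝ := fun s => s ^ p * E s with hG
  have hGc : ContinuousOn G (Set.Ici t₁) := by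
    intro t ht
    have ht0 := hpos t (ht₁.trans ht)
    exact ((Real.continuousAt_rpow_const t p (Or.inl ht0.ne')).mul
      (hEd t (ht₁.trans ht)).continuousAt).continuousWithinAt
  have hE0 : ∀ t, ‖x' t‖ ^ 2 / 2 ≤ E t := fun t => by
    have := hFle (x t)
    simp only [hEdef]; linarith
  have hE0' : ∀ t, 0 ≤ E t := fun t => le_trans (by positivity) (hE0 t)
  -- key estimate
  have hkey : ∀ t, t₁ ≤ t → M ≤ G t →
      2 * c ^ 2 * (α / t ^ θ) * ‖x t - P (x t)‖ ^ 2 ≤ E t * t := by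
    intro t ht hMG
    have ht0 := hpos t (ht₁.trans ht)
    have h1 := hMp t ‖x t - P (x t)‖ (E t) ht0 (norm_nonneg _) (by
      rw [← hp, Real.rpow_neg ht0.le, ← div_eq_mul_inv, div_le_iff₀ (by positivity), mul_comm]
      exact hMG) (hKx t (ht₁.trans ht))
    rw [Real.rpow_add ht0, Real.rpow_one] at h1
    have h2 : 0 < t ^ θ := by positivity
    have h3 : 2 * c ^ 2 * (α / t ^ θ) * ‖x t - P (x t)‖ ^ 2
        = (2 * c ^ 2 * α * ‖x t - P (x t)‖ ^ 2) / t ^ θ := by ring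
    rw [h3, div_le_iff₀ h2]
    linarith
  have hinner : ∀ t, |⟪x t - P (x t), x' t⟫| ≤ ‖x t - P (x t)‖ * ‖x' t‖ := fun t =>
    abs_real_inner_le_norm _ _
  set Φ : ℝ → ℝ := fun s => s ^ p * E s + s ^ p * (c / s) * ⟪x s - P (x s), x' s⟫ with hΦ
  have hbar : ∀ a b, t₁ ≤ a → a ≤ b → (∀ s ∈ Set.Icc a b, M ≤ G s) → G b ≤ 8 * G a := by
    intro a b ha hab hMs
    have hequiv : ∀ s ∈ Set.Icc a b, G s ≤ 4 * Φ s ∧ Φ s ≤ 2 * G s := by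
      intro s hs
      have hs1 := ha.trans hs.1
      have hs0 := hpos s (ht₁.trans hs1)
      have := aux_equiv hs0 (by linarith : 1 ≤ c) (hE0 s) (hinner s) (hqt s hs1) (hkey s hs1 (hMs s hs))
      have hsp : 0 ≤ s ^ p := by positivity
      have h1 := mul_le_mul_of_nonneg_left this.1 hsp
      have h2 := mul_le_mul_of_nonneg_left this.2 hsp
      simp only [hG, hΦ]
      constructor <;> linarith
    have hΦle : Φ b ≤ Φ a := by
      refine image_le_of_liminf_slope_right_le_deriv_boundary (f := Φ) (B := fun _ => Φ a) (B' := fun _ => 0)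
        (a := a) (b := b) ?_ le_rfl continuousOn_const (fun s _ => hasDerivWithinAt_const _ _ _) ?_
        (Set.right_mem_Icc.2 hab)
      · intro s hs
        have hs1 := ha.trans hs.1
        have hs2 := ht₁.trans hs1
        have hs0 := hpos s hs2
        have c1 := Real.continuousAt_rpow_const s p (Or.inl hs0.ne')
        have c2 : ContinuousAt (fun s => c / s) s := continuousAt_const.div continuousAt_id hs0.ne'
        have c3 := (hx s hs2).continuousAt
        have c4 : ContinuousAt (fun s => P (x s)) s := hPc.continuousAt.comp c3
        exact ((c1.mul (hEd s hs2).continuousAt).add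
          ((c1.mul c2).mul ((c3.sub c4).inner (𝕜 := ℝ) (hx'd s hs2).continuousAt))).continuousWithinAt
      · intro t htI r hr
        have hs1 := ha.trans htI.1
        have hs2 := ht₁.trans hs1
        have ht0 := hpos t hs2
        have d1 : HasDerivAt (fun s : ℝ => s ^ p) (t ^ p * (p / t)) t := by
          refine (Real.hasDerivAt_rpow_const (Or.inl ht0.ne')).congr_deriv ?_
          rw [Real.rpow_sub ht0, Real.rpow_one]; ring
        have d2 : HasDerivAt (fun s : ℝ => c / s) (-(c / t ^ 2)) t := by
          have := (hasDerivAt_inv ht0.ne').const_mul c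
          simp only [← div_eq_mul_inv] at this
          refine this.congr_deriv ?_
          ring
        have d3 := ((hx t hs2).sub_const (P (x t))).inner ℝ (hx'd t hs2)
        have d4 := (d1.mul (hEd t hs2)).add ((d1.mul d2).mul d3)
        refine (aux_dini hPm (hx t hs2) (hx'd t hs2).continuousAt (e := fun s => s ^ p * E s)
          (w := fun s => s ^ p * (c / s))
          (d1.mul d2).continuousAt ?_ d4 ?_ hr).frequently
        · filter_upwards [lt_mem_nhds ht0] with s hs
          positivity
        · have h4 : x'' t = -gradient F (x t) - (α / t ^ θ) • x' t := by
            have := hode t hs2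
            rw [← sub_eq_zero, ← this]; abel
          have h5 : ⟪x t - P (x t), x'' t⟫ = -⟪gradient F (x t), x t - P (x t)⟫
              - (α / t ^ θ) * ⟪x t - P (x t), x' t⟫ := by
            rw [h4, inner_sub_right, inner_neg_right, inner_smul_right,
              real_inner_comm (x t - P (x t)) (gradient F (x t))]
          have h6 := aux_grad hconv hdiff (x t) (P (x t))
          rw [hFstar _ (hPX _)] at h6
          have h7 := aux_alg (E := E t) (v := ‖x' t‖) ht0 hp1 hc
            (g := ⟪gradient F (x t), x t - P (x t)⟫)
            (by simp only [hEdef]; linarith) (hinner t) (hqt t hs1)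
            (hkey t hs1 (hMs t ⟨htI.1, htI.2.le⟩))
          have h8 := mul_nonpos_of_nonneg_of_nonpos (by positivity : 0 ≤ t ^ p) h7
          refine le_trans (le_of_eq ?_) h8
          simp only [Pi.mul_apply]
          rw [h5, real_inner_self_eq_norm_sq]
          ring
    have e1 := (hequiv b (Set.right_mem_Icc.2 hab)).1
    have e2 := (hequiv a (Set.left_mem_Icc.2 hab)).2
    linarith
  have hG1 : 0 ≤ G t₁ := by
    have := hpos t₁ ht₁
    have := hE0' t₁
    simp only [hG]; positivity
  refine ⟨8 * max M (G t₁), by have := le_max_left M (G t₁); linarith, t₁, ht₁, fun t ht => ?_⟩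
  have h1 := aux_barrier hM hGc hG1 hbar t ht
  have ht0 := hpos t (ht₁.trans ht)
  have h2 : -(2 * r * γ₂ / (γ₂ - 2)) = -p := by rw [hr, hp]; ring
  have h3 : 0 ≤ ‖x' t‖ ^ 2 / 2 := by positivity
  have h4 : F (x t) - Fstar ≤ E t := by simp only [hEdef]; linarith
  rw [h2, Real.rpow_neg ht0.le, ← div_eq_mul_inv]
  refine h4.trans ?_
  rw [le_div_iff₀ (by positivity), mul_comm]
  exact h1
end
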